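/- arXiv:math/9902154 — 2 statements merged into one kernel-verified Lean document; each statement's English description precedes it below -/
import Mathlib

section
/- Let K ⊂ ℂ be compact, connected, full, and locally connected, and let K₀ be the closure of a connected component of the interior of K. Then for any z in the interior of K₀ and any z' ∈ K ∖ K₀, there is a unique point w ∈ ∂K₀ such that every path in K from z' to z passes through w; moreover removing w disconnects K, with z and z' lying in different connected components of K ∖ {w}. -/
open Set Metric Filter Topology

/-- A set is full if its complement has no bounded connected components. -/
def IsFull (K : Set ℂ) : Prop :=
  ∀ w ∉ K, ¬ Bornology.IsBounded (connectedComponentIn Kᶜ w)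

/-- `γ` is a path in `K` from `a` to `b`, parametrized over `[0,1]`. -/
def IsPathIn (K : Set ℂ) (γ : ℝ → ℂ) (a b : ℂ) : Prop :=
  ContinuousOn γ (Set.Icc 0 1) ∧ γ 0 = a ∧ γ 1 = b ∧ γ '' Set.Icc 0 1 ⊆ K

/-!
Let `U` be a component of the interior of `K`, so that `K₀ = closure U`, and let `C` be the
component of `K \ K₀` containing `z'`. Local connectedness implies that a connected subset of `K`
joining `z'` to `K₀` meets `K₀` at a point of `closure C`. Everything follows once
`closure C ∩ K₀` is shown to be a single point `w`; a path avoiding any other given point of `∂K₀`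
runs through `C`, `w` and `U`.

Suppose `C` accumulates at two points of `K₀`. Small continua in `K` around them, a path in `U` and
a path in `K \ K₀` then form a connected compact set containing two points `s₁`, `s₂` of `U` but not
the rest of the segment between them, which lies in `U`. Two points facing each other across this
segment are separated by the whole configuration, but not by its part without the path in `K \ K₀`.
The separation therefore involves a bounded complementary component, which is contained in `K` by
fullness and hence in `U`, as it meets `U`; this contradicts that the path avoids `K₀ = closure U`.

Separation of `p` and `q` by a plane compact set `X` is detected by Borsuk's criterion: `p` and `q`
lie in the same component of the complement exactly when `(z - p) / (z - q)` has a continuous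
logarithm on `X`. Here such a logarithm would change by `2 π i` more along the segment than along
the rest of `X`.
-/

section Topology

variable {α : Type*} [TopologicalSpace α] {X S D : Set α}

theorem inter_frontier_nonempty_of_isPreconnected (hS : IsPreconnected S)
    (h : (S ∩ D).Nonempty) (h' : (S \ D).Nonempty) : (S ∩ frontier D).Nonempty := by
  by_contra hSD
  have hcover : S ⊆ interior D ∪ interior Dᶜ := by
    rw [← compl_frontier_eq_union_interior]
    exact fun y hy hyD ↦ hSD ⟨y, hy, hyD⟩
  obtain ⟨y, hyS, hyD⟩ := h
  obtain ⟨z, hzS, hzD⟩ := h'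
  obtain ⟨w, -, hwD, hwD'⟩ := hS _ _ isOpen_interior isOpen_interior hcover
    ⟨y, hyS, (hcover hyS).resolve_right fun h ↦ interior_subset h hyD⟩
    ⟨z, hzS, (hcover hzS).resolve_left fun h ↦ hzD (interior_subset h)⟩
  exact interior_subset hwD' (interior_subset hwD)

variable [LocallyConnectedSpace α]

theorem frontier_connectedComponentIn_compl_subset (hX : IsClosed X) (p : α) :
    frontier (connectedComponentIn Xᶜ p) ⊆ X := by
  rintro z ⟨hz, hz'⟩
  by_contra hzX
  have hopen (y : α) : IsOpen (connectedComponentIn Xᶜ y) := hX.isOpen_compl.connectedComponentIn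
  obtain ⟨y, hyz, hyp⟩ := mem_closure_iff.1 hz _ (hopen z) (mem_connectedComponentIn hzX)
  rw [(hopen p).interior_eq, connectedComponentIn_eq hyp, ← connectedComponentIn_eq hyz] at hz'
  exact hz' (mem_connectedComponentIn hzX)

theorem interior_closure_connectedComponentIn_interior (hX : IsClosed X) (x : α) :
    interior (closure (connectedComponentIn (interior X) x)) =
      connectedComponentIn (interior X) x := by
  set U := connectedComponentIn (interior X) x
  have hUX : U ⊆ interior X := connectedComponentIn_subset _ _
  have hU : U ⊆ interior (closure U) :=
    interior_maximal subset_closure isOpen_interior.connectedComponentIn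
  refine subset_antisymm (fun y hy ↦ ?_) hU
  obtain ⟨u, hu⟩ := closure_nonempty_iff.1 ⟨y, interior_subset hy⟩
  have hpre : IsPreconnected (interior (closure U)) :=
    isPreconnected_connectedComponentIn.subset_closure hU interior_subset
  have hsub := hpre.subset_connectedComponentIn (hU hu)
    (interior_mono (closure_minimal (hUX.trans interior_subset) hX))
  rw [← connectedComponentIn_eq hu] at hsub
  exact hsub hy

end Topology

section Complement

variable {E : Type*} [NormedAddCommGroup E] [NormedSpace ℝ E]

theorem isPreconnected_compl_closedBall (hE : 1 < Module.rank ℝ E) (c : E) (r : ℝ) :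
    IsPreconnected (closedBall c r)ᶜ := by
  rcases lt_or_ge r 0 with hr | hr
  · rw [closedBall_eq_empty.2 hr, compl_empty]
    exact convex_univ.isPreconnected
  have himage : (closedBall c r)ᶜ =
      (fun y : ℝ × E ↦ c + y.1 • y.2) '' (Ioi r ×ˢ sphere (0 : E) 1) := by
    ext z
    simp only [mem_compl_iff, mem_closedBall, dist_eq_norm, not_le, mem_image, mem_prod, mem_Ioi,
      mem_sphere, sub_zero, Prod.exists]
    constructor
    · intro h
      have h0 : ‖z - c‖ ≠ 0 := (hr.trans_lt h).ne'
      refine ⟨‖z - c‖, ‖z - c‖⁻¹ • (z - c), ⟨h, ?_⟩, ?_⟩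
      · rw [norm_smul, norm_inv, norm_norm, inv_mul_cancel₀ h0]
      · rw [smul_inv_smul₀ h0, add_sub_cancel]
    · rintro ⟨t, u, ⟨ht, hu⟩, rfl⟩
      rw [add_sub_cancel_left, norm_smul, hu, mul_one]
      exact ht.trans_le (Real.le_norm_self t)
  rw [himage]
  exact (isPreconnected_Ioi.prod (isPreconnected_sphere hE 0 1)).image _ (by fun_prop)

theorem isBounded_connectedComponentIn_compl_or (hE : 1 < Module.rank ℝ E) {X : Set E}
    (hX : Bornology.IsBounded X) {p q : E} (hpq : q ∉ connectedComponentIn Xᶜ p) :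
    Bornology.IsBounded (connectedComponentIn Xᶜ p) ∨
      Bornology.IsBounded (connectedComponentIn Xᶜ q) := by
  by_contra! h
  obtain ⟨r, hr⟩ := hX.subset_closedBall 0
  have hfar {y : E} (hy : ¬ Bornology.IsBounded (connectedComponentIn Xᶜ y)) :
      (closedBall (0 : E) r)ᶜ ⊆ connectedComponentIn Xᶜ y := by
    obtain ⟨z, hz, hzr⟩ := not_subset.1 fun h ↦ hy (isBounded_closedBall.subset h)
    rw [connectedComponentIn_eq hz]
    exact (isPreconnected_compl_closedBall hE 0 r).subset_connectedComponentIn hzr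
      (compl_subset_compl.2 hr)
  obtain ⟨z, hzp, hzr⟩ := not_subset.1 fun h' ↦ h.1 (isBounded_closedBall.subset h')
  have hzq := hfar h.2 hzr
  have hq : q ∈ Xᶜ := connectedComponentIn_nonempty_iff.1 ⟨z, hzq⟩
  rw [connectedComponentIn_eq hzp, ← connectedComponentIn_eq hzq] at hpq
  exact hpq (mem_connectedComponentIn hq)

end Complement

section Log

open Complex

variable {α : Type*} [TopologicalSpace α] {X Y : Set α} {f g : α → ℂ}

theorem sub_eq_sub_of_exp_eq_exp (hX : IsPreconnected X) {φ ψ : α → ℂ}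
    (hφ : ContinuousOn φ X) (hψ : ContinuousOn ψ X) (h : ∀ z ∈ X, exp (φ z) = exp (ψ z))
    {x y : α} (hx : x ∈ X) (hy : y ∈ X) : φ x - ψ x = φ y - ψ y := by
  have hdiscrete : IsDiscrete (range ((↑) : ℤ → ℂ)) :=
    isClosedEmbedding_intCast.isInducing.isDiscrete_range
  have hmaps : MapsTo (fun z ↦ (φ z - ψ z) / (2 * Real.pi * I)) X (range ((↑) : ℤ → ℂ)) := by
    intro z hz
    obtain ⟨n, hn⟩ := exp_eq_exp_iff_exists_int.1 (h z hz)
    exact ⟨n, by rw [eq_div_iff two_pi_I_ne_zero, hn, add_sub_cancel_left]⟩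
  exact (div_left_inj' two_pi_I_ne_zero).1
    (hX.constant_of_mapsTo hdiscrete (by fun_prop) hmaps hx hy)

/-- `f` has a continuous branch of its logarithm on `X`; in particular `f` has no zero on `X`. -/
def HasLogOn (f : α → ℂ) (X : Set α) : Prop :=
  ∃ φ : α → ℂ, ContinuousOn φ X ∧ ∀ z ∈ X, exp (φ z) = f z

namespace HasLogOn

theorem ne_zero (h : HasLogOn f X) {z : α} (hz : z ∈ X) : f z ≠ 0 := by
  obtain ⟨φ, -, hφ⟩ := h
  exact hφ z hz ▸ exp_ne_zero _

theorem mono (h : HasLogOn f Y) (hXY : X ⊆ Y) : HasLogOn f X := by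
  obtain ⟨φ, hc, hφ⟩ := h
  exact ⟨φ, hc.mono hXY, fun z hz ↦ hφ z (hXY hz)⟩

theorem congr (h : HasLogOn f X) (hfg : EqOn f g X) : HasLogOn g X := by
  obtain ⟨φ, hc, hφ⟩ := h
  exact ⟨φ, hc, fun z hz ↦ (hφ z hz).trans (hfg hz)⟩

theorem mul (hf : HasLogOn f X) (hg : HasLogOn g X) : HasLogOn (fun z ↦ f z * g z) X := by
  obtain ⟨φ, hφc, hφ⟩ := hf
  obtain ⟨ψ, hψc, hψ⟩ := hg
  exact ⟨fun z ↦ φ z + ψ z, hφc.add hψc, fun z hz ↦ by rw [exp_add, hφ z hz, hψ z hz]⟩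

theorem inv (hf : HasLogOn f X) : HasLogOn (fun z ↦ (f z)⁻¹) X := by
  obtain ⟨φ, hφc, hφ⟩ := hf
  exact ⟨fun z ↦ -φ z, hφc.neg, fun z hz ↦ by rw [exp_neg, hφ z hz]⟩

theorem of_mapsTo_slitPlane (hf : ContinuousOn f X) (h : MapsTo f X slitPlane) : HasLogOn f X :=
  ⟨fun z ↦ log (f z), hf.clog h, fun _ hz ↦ exp_log (slitPlane_ne_zero (h hz))⟩

theorem union (hX : IsClosed X) (hY : IsClosed Y) (hXY : IsPreconnected (X ∩ Y))
    (hfX : HasLogOn f X) (hfY : HasLogOn f Y) : HasLogOn f (X ∪ Y) := by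
  classical
  obtain ⟨φ, hφc, hφ⟩ := hfX
  obtain ⟨ψ, hψc, hψ⟩ := hfY
  obtain ⟨c, hexp, hc⟩ : ∃ c, exp c = 1 ∧ ∀ z ∈ X ∩ Y, φ z = ψ z + c := by
    rcases (X ∩ Y).eq_empty_or_nonempty with he | ⟨y, hy⟩
    · exact ⟨0, exp_zero, by simp [he]⟩
    have h : ∀ z ∈ X ∩ Y, exp (φ z) = exp (ψ z) := fun z hz ↦
      (hφ z hz.1).trans (hψ z hz.2).symm
    refine ⟨φ y - ψ y, by rw [exp_sub, h y hy, div_self (exp_ne_zero _)], fun z hz ↦ ?_⟩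
    rw [sub_eq_sub_of_exp_eq_exp hXY (hφc.mono inter_subset_left) (hψc.mono inter_subset_right)
      h hy hz, add_sub_cancel]
  have hX' : EqOn (X.piecewise φ fun z ↦ ψ z + c) φ X := X.piecewise_eqOn _ _
  have hY' : EqOn (X.piecewise φ fun z ↦ ψ z + c) (fun z ↦ ψ z + c) Y := fun z hz ↦ by
    by_cases hzX : z ∈ X
    · exact (hX' hzX).trans (hc z ⟨hzX, hz⟩)
    · exact X.piecewise_eq_of_notMem _ _ hzX
  refine ⟨_, (hφc.congr hX').union_of_isClosed ((hψc.add continuousOn_const).congr hY') hX hY, ?_⟩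
  rintro z (hz | hz)
  · rw [hX' hz, hφ z hz]
  · rw [hY' hz, exp_add, hexp, mul_one, hψ z hz]

end HasLogOn

theorem hasLogOn_univ {E : Type*} [NormedAddCommGroup E] [NormedSpace ℝ E] {F : E → ℂ}
    (hF : Continuous F) (h0 : ∀ z, F z ≠ 0) : HasLogOn F univ := by
  have : ContractibleSpace (univ : Set E) :=
    (convex_univ (𝕜 := ℝ)).contractibleSpace univ_nonempty
  exact exists_continuousOn_eqOn_exp_comp (SimplyConnectedSpace.ofContractible _) isOpen_univ
    hF.continuousOn (by simpa using h0)

theorem not_hasLogOn_sub_sphere (p : ℂ) {R : ℝ} (hR : 0 < R) :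
    ¬ HasLogOn (fun z ↦ z - p) (sphere p R) := by
  rintro ⟨φ, hφc, hφ⟩
  have hexp (θ : ℝ) : exp (φ (circleMap p R θ)) = exp (Real.log R + θ * I) := by
    rw [hφ _ (circleMap_mem_sphere p hR.le θ), exp_add, ← ofReal_exp, Real.exp_log hR]
    simp [circleMap]
  have hc : Continuous fun θ ↦ φ (circleMap p R θ) :=
    hφc.comp_continuous (continuous_circleMap p R) fun θ ↦ circleMap_mem_sphere p hR.le θ
  have h := sub_eq_sub_of_exp_eq_exp isPreconnected_univ hc.continuousOn
    (ψ := fun θ : ℝ ↦ Real.log R + θ * I) (by fun_prop) (fun θ _ ↦ hexp θ)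
    (mem_univ 0) (mem_univ (2 * Real.pi))
  rw [(periodic_circleMap p R).eq] at h
  push_cast at h
  exact two_pi_I_ne_zero (by linear_combination h)

theorem not_hasLogOn_of_frontier_subset {D A : Set ℂ} (hD : Bornology.IsBounded D)
    (hDA : frontier D ⊆ A) {p q : ℂ} (hp : p ∈ D) (hq : q ∉ closure D) :
    ¬ HasLogOn (fun z ↦ (z - p) / (z - q)) A := by
  classical
  rintro ⟨φ, hφc, hφ⟩
  obtain ⟨g, hg⟩ := ContinuousMap.exists_restrict_eq (isClosed_frontier (s := D))
    ⟨_, (hφc.mono hDA).domRestrict⟩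
  have hgφ (z : ℂ) (hz : z ∈ frontier D) : g z = φ z := congrArg (fun f ↦ f ⟨z, hz⟩) hg
  have hne : ∀ z ∈ closure D, z - q ≠ 0 := fun z hz h ↦ hq (sub_eq_zero.1 h ▸ hz)
  -- A logarithm on `frontier D` would let us replace `z - p` inside `D` so as to remove its zero.
  let F : ℂ → ℂ := D.piecewise (fun z ↦ exp (g z) * (z - q)) fun z ↦ z - p
  have hF : Continuous F := by
    refine Continuous.piecewise (fun z hz ↦ ?_) (by fun_prop) (by fun_prop)
    rw [hgφ z hz, hφ z (hDA hz), div_mul_cancel₀ _ (hne z hz.1)]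
  have hF0 (z : ℂ) : F z ≠ 0 := by
    by_cases hz : z ∈ D
    · simp only [F, hz, piecewise_eq_of_mem]
      exact mul_ne_zero (exp_ne_zero _) (hne z (subset_closure hz))
    · simp only [F, hz, not_false_eq_true, piecewise_eq_of_notMem]
      exact fun h ↦ hz (sub_eq_zero.1 h ▸ hp)
  obtain ⟨R, hR, hDR⟩ := hD.subset_ball_lt 0 p
  refine not_hasLogOn_sub_sphere p hR
    (((hasLogOn_univ hF hF0).mono (subset_univ _)).congr fun z hz ↦ ?_)
  exact D.piecewise_eq_of_notMem _ _ fun h ↦ (mem_sphere.1 hz).not_lt (mem_ball.1 (hDR h))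

theorem hasLogOn_div_of_isPreconnected {X D : Set ℂ} (hX : IsClosed X) (hD : IsPreconnected D)
    (hDX : Disjoint D X) {p q : ℂ} (hp : p ∈ D) (hq : q ∈ D) :
    HasLogOn (fun z ↦ (z - p) / (z - q)) X := by
  have hne {p : ℂ} (hp : p ∈ D) {z : ℂ} (hz : z ∈ X) : z - p ≠ 0 := fun h ↦
    disjoint_left.1 hDX hp (sub_eq_zero.1 h ▸ hz)
  refine hD.induction₂ (fun p q ↦ HasLogOn (fun z ↦ (z - p) / (z - q)) X) (fun q hq ↦ ?_)
    (fun x y z _ hy _ hxy hyz ↦ ?_) (fun x y _ _ h ↦ ?_) hp hq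
  · obtain ⟨r, hr, hball⟩ := isOpen_iff.1 hX.isOpen_compl q (disjoint_left.1 hDX hq)
    filter_upwards [mem_nhdsWithin_of_mem_nhds (ball_mem_nhds q hr)] with p hp
    suffices h : HasLogOn (fun z ↦ (z - p) / (z - q)) X by
      exact h.inv.congr fun z _ ↦ inv_div _ _
    refine .of_mapsTo_slitPlane
      (ContinuousOn.div (by fun_prop) (by fun_prop) fun z hz ↦ hne hq hz) fun z hz ↦ ?_
    have h1 : (z - p) / (z - q) = 1 + (q - p) / (z - q) := by
      field_simp [hne hq hz]
      ring
    rw [h1]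
    apply mem_slitPlane_of_norm_lt_one
    rw [norm_div, div_lt_one (norm_pos_iff.2 (hne hq hz)), ← dist_eq_norm, ← dist_eq_norm]
    exact (mem_ball'.1 hp).trans_le (not_lt.1 fun h ↦ hball (mem_ball.2 h) hz)
  · exact (hxy.mul hyz).congr fun w hw ↦ div_mul_div_cancel₀ (hne hy hw)
  · exact h.inv.congr fun w _ ↦ inv_div _ _

theorem hasLogOn_div_iff {X : Set ℂ} (hX : IsCompact X) {p q : ℂ} :
    HasLogOn (fun z ↦ (z - p) / (z - q)) X ↔ q ∈ connectedComponentIn Xᶜ p := by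
  refine ⟨fun h ↦ ?_, fun hq ↦ ?_⟩
  · have hp : p ∈ Xᶜ := fun hp ↦ h.ne_zero hp (by simp)
    -- `x / 0 = 0`, so the quotient vanishes at `q` too.
    have hq : q ∈ Xᶜ := fun hq ↦ h.ne_zero hq (by simp)
    by_contra hpq
    have hqp : p ∉ connectedComponentIn Xᶜ q := fun h ↦
      hpq (connectedComponentIn_eq h ▸ mem_connectedComponentIn hq)
    have hclosure {x y : ℂ} (hy : y ∈ Xᶜ) (hxy : y ∉ connectedComponentIn Xᶜ x) :
        y ∉ closure (connectedComponentIn Xᶜ x) := fun h ↦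
      hy (frontier_connectedComponentIn_compl_subset hX.isClosed x
        ⟨h, fun hi ↦ hxy (interior_subset hi)⟩)
    rcases isBounded_connectedComponentIn_compl_or (by simp) hX.isBounded hpq with hb | hb
    · exact not_hasLogOn_of_frontier_subset hb
        (frontier_connectedComponentIn_compl_subset hX.isClosed p)
        (mem_connectedComponentIn hp) (hclosure hq hpq) h
    · exact not_hasLogOn_of_frontier_subset hb
        (frontier_connectedComponentIn_compl_subset hX.isClosed q)
        (mem_connectedComponentIn hq) (hclosure hp hqp) (h.inv.congr fun z _ ↦ inv_div _ _)
  · have hp : p ∈ Xᶜ := connectedComponentIn_nonempty_iff.1 ⟨q, hq⟩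
    exact hasLogOn_div_of_isPreconnected hX.isClosed isPreconnected_connectedComponentIn
      (disjoint_compl_left.mono_left (connectedComponentIn_subset _ _))
      (mem_connectedComponentIn hp) hq

end Log

theorem isCompact_segment {E : Type*} [AddCommGroup E] [Module ℝ E] [TopologicalSpace E]
    [ContinuousAdd E] [ContinuousSMul ℝ E] (a b : E) : IsCompact (segment ℝ a b) := by
  rw [segment_eq_image]
  exact isCompact_Icc.image (by fun_prop)

section Crossing

open Complex

variable {m v : ℂ} {δ : ℝ} {L E₁ E₂ : Set ℂ}

theorem div_mem_slitPlane_of_notMem_segment {p q z : ℂ} (h : z ∉ segment ℝ p q) :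
    (z - p) / (z - q) ∈ slitPlane := by
  have hzq : z - q ≠ 0 := fun h' ↦ h (sub_eq_zero.1 h' ▸ right_mem_segment ℝ p q)
  contrapose! h
  obtain ⟨hre, him⟩ := not_or.1 (mem_slitPlane_iff.not.1 h)
  obtain ⟨t, ht⟩ : ∃ t : ℝ, t = -((z - p) / (z - q)).re := ⟨_, rfl⟩
  have ht0 : 0 ≤ t := by linarith
  have hdiv : (z - p) / (z - q) = -(t : ℂ) :=
    Complex.ext (by simp [ht]) (by simpa using not_not.1 him)
  rw [div_eq_iff hzq] at hdiv
  have h1 : (1 + t : ℂ) ≠ 0 := by exact_mod_cast (by positivity : (1 + t : ℝ) ≠ 0)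
  refine ⟨1 / (1 + t), t / (1 + t), by positivity, by positivity, by field_simp, ?_⟩
  simp only [real_smul]
  push_cast
  field_simp
  linear_combination -hdiv

/-- The logarithm of `(u - δ i) / (u + δ i)` that is continuous in `u ∈ ℝ`, for `δ > 0`. It agrees
with the principal branch for `u < 0` and exceeds it by `2 π i` for `u > 0`. -/
noncomputable def crossingLog (δ u : ℝ) : ℂ :=
  Real.pi * I + log (δ + u * I) - log (δ - u * I)

theorem continuous_crossingLog (hδ : 0 < δ) : Continuous (crossingLog δ) :=
  (continuous_const.add (Continuous.clog (by fun_prop) fun u ↦ Or.inl (by simpa))).sub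
    (Continuous.clog (by fun_prop) fun u ↦ Or.inl (by simpa))

theorem exp_crossingLog (hδ : 0 < δ) (u : ℝ) :
    exp (crossingLog δ u) = (u - δ * I) / (u + δ * I) := by
  have h1 : (δ + u * I : ℂ) ≠ 0 := slitPlane_ne_zero (Or.inl (by simpa))
  have h2 : (δ - u * I : ℂ) ≠ 0 := slitPlane_ne_zero (Or.inl (by simpa))
  rw [crossingLog, exp_sub, exp_add, exp_pi_mul_I, exp_log h1, exp_log h2,
    ← mul_div_mul_left _ _ I_ne_zero]
  congr 1
  · linear_combination -(u : ℂ) * I_sq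
  · linear_combination -(u : ℂ) * I_sq

theorem im_crossingLog (hδ : 0 < δ) (u : ℝ) :
    (crossingLog δ u).im = Real.pi + 2 * arg (δ + u * I) := by
  have harg : arg (δ - u * I) = -arg (δ + u * I) := by
    have hconj : (δ - u * I : ℂ) = starRingEnd ℂ (δ + u * I) := by simp [sub_eq_add_neg]
    have hpi : arg (δ + u * I) ≠ Real.pi := slitPlane_arg_ne_pi (Or.inl (by simpa))
    rw [hconj, arg_conj, if_neg hpi]
  simp only [crossingLog, sub_im, add_im, log_im, harg, mul_I_im, ofReal_re]
  ring

theorem log_exp_crossingLog_of_neg (hδ : 0 < δ) {u : ℝ} (hu : u < 0) :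
    log (exp (crossingLog δ u)) = crossingLog δ u := by
  have hneg : arg (δ + u * I) < 0 := arg_neg_iff.2 (by simpa)
  have hlt : -(Real.pi / 2) < arg (δ + u * I) := neg_pi_div_two_lt_arg_iff.2 (Or.inl (by simpa))
  have him := im_crossingLog hδ u
  rw [log_exp] <;> linarith

theorem log_exp_crossingLog_of_pos (hδ : 0 < δ) {u : ℝ} (hu : 0 < u) :
    log (exp (crossingLog δ u)) = crossingLog δ u - 2 * Real.pi * I := by
  have hpos : 0 < arg (δ + u * I) := by
    refine (arg_nonneg_iff.2 (by simpa using hu.le)).lt_of_ne' fun h ↦ hu.ne' ?_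
    simpa using (arg_eq_zero_iff.1 h).2
  have hlt : arg (δ + u * I) < Real.pi / 2 := arg_lt_pi_div_two_iff.2 (Or.inl (by simpa))
  have him : (crossingLog δ u - 2 * Real.pi * I).im = 2 * arg (δ + u * I) - Real.pi := by
    rw [sub_im, im_crossingLog hδ, mul_I_im, ← ofReal_ofNat, ← ofReal_mul, ofReal_re]
    ring
  rw [← exp_periodic.sub_eq, log_exp] <;> linarith

theorem exp_crossingLog_div (hv : v ≠ 0) (hδ : 0 < δ) {z : ℂ}
    (hz : z ∈ segment ℝ (m - v) (m + v)) :
    exp (crossingLog δ ((z - m) / v).re) =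
      (z - (m + δ * I * v)) / (z - (m - δ * I * v)) := by
  obtain ⟨u, rfl⟩ : ∃ u : ℝ, z = m + u * v := by
    obtain ⟨a, b, -, -, hab, rfl⟩ := hz
    refine ⟨b - a, ?_⟩
    have hab' : (a + b : ℂ) = 1 := by exact_mod_cast hab
    simp only [real_smul, ofReal_sub]
    linear_combination m * hab'
  rw [add_sub_cancel_left, mul_div_cancel_right₀ _ hv, ofReal_re, exp_crossingLog hδ,
    ← mul_div_mul_right _ _ hv]
  congr 1 <;> ring

theorem hasLogOn_div_segment (hv : v ≠ 0) (hδ : 0 < δ) :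
    HasLogOn (fun z ↦ (z - (m + δ * I * v)) / (z - (m - δ * I * v)))
      (segment ℝ (m - v) (m + v)) :=
  ⟨fun z ↦ crossingLog δ ((z - m) / v).re,
    ((continuous_crossingLog hδ).comp (by fun_prop)).continuousOn,
    fun _ ↦ exp_crossingLog_div hv hδ⟩

theorem continuousOn_div_of_disjoint_segment {p q : ℂ} (hLd : Disjoint L (segment ℝ p q)) :
    ContinuousOn (fun z ↦ (z - p) / (z - q)) L :=
  ContinuousOn.div (by fun_prop) (by fun_prop) fun _ hz h ↦
    disjoint_left.1 hLd hz (sub_eq_zero.1 h ▸ right_mem_segment ℝ p q)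

theorem notMem_connectedComponentIn_compl_segment_union (hδ : 0 < δ) (hLc : IsCompact L)
    (hL : IsPreconnected L) (h₁ : m - v ∈ L) (h₂ : m + v ∈ L)
    (hLd : Disjoint L (segment ℝ (m + δ * I * v) (m - δ * I * v))) :
    m - δ * I * v ∉
      connectedComponentIn (segment ℝ (m - v) (m + v) ∪ L)ᶜ (m + δ * I * v) := by
  intro hq
  have hv : v ≠ 0 := by
    rintro rfl
    exact disjoint_left.1 hLd h₁ (by simp)
  obtain ⟨φ, hφc, hφ⟩ := (hasLogOn_div_iff ((isCompact_segment _ _).union hLc)).2 hq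
  have hslit : MapsTo (fun z ↦ (z - (m + δ * I * v)) / (z - (m - δ * I * v))) L slitPlane :=
    fun z hz ↦ div_mem_slitPlane_of_notMem_segment (disjoint_left.1 hLd hz)
  have hS₁ := left_mem_segment ℝ (m - v) (m + v)
  have hS₂ := right_mem_segment ℝ (m - v) (m + v)
  have hφL := sub_eq_sub_of_exp_eq_exp hL (hφc.mono subset_union_right)
    ((continuousOn_div_of_disjoint_segment hLd).clog hslit)
    (fun z hz ↦ (hφ z (.inr hz)).trans (exp_log (slitPlane_ne_zero (hslit hz))).symm) h₁ h₂
  have hφS := sub_eq_sub_of_exp_eq_exp (convex_segment _ _).isPreconnected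
    (hφc.mono subset_union_left)
    ((continuous_crossingLog hδ).comp (f := fun z ↦ ((z - m) / v).re) (by fun_prop)).continuousOn
    (fun z hz ↦ (hφ z (.inl hz)).trans (exp_crossingLog_div hv hδ hz).symm) hS₁ hS₂
  simp only [Function.comp_apply] at hφS
  rw [← exp_crossingLog_div hv hδ hS₁, ← exp_crossingLog_div hv hδ hS₂,
    log_exp_crossingLog_of_neg hδ (by simp [hv]),
    log_exp_crossingLog_of_pos hδ (by simp [hv])] at hφL
  exact two_pi_I_ne_zero (by linear_combination hφS - hφL)

theorem mem_connectedComponentIn_compl_segment_union_union (hδ : 0 < δ) (hE₁ : IsCompact E₁)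
    (hE₂ : IsCompact E₂) (hE : Disjoint E₁ E₂)
    (h₁ : segment ℝ (m - v) (m + v) ∩ E₁ = {m - v})
    (h₂ : segment ℝ (m - v) (m + v) ∩ E₂ = {m + v})
    (hd : Disjoint (E₁ ∪ E₂) (segment ℝ (m + δ * I * v) (m - δ * I * v))) :
    m - δ * I * v ∈
      connectedComponentIn (segment ℝ (m - v) (m + v) ∪ E₁ ∪ E₂)ᶜ (m + δ * I * v) := by
  have hv : v ≠ 0 := by
    rintro rfl
    exact disjoint_left.1 hd (.inl (h₁.ge rfl).2) (by simp)
  have hS := isCompact_segment (m - v) (m + v)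
  have hlog {E : Set ℂ} (hE : E ⊆ E₁ ∪ E₂) :
      HasLogOn (fun z ↦ (z - (m + δ * I * v)) / (z - (m - δ * I * v))) E :=
    .of_mapsTo_slitPlane (continuousOn_div_of_disjoint_segment (hd.mono_left hE)) fun z hz ↦
      div_mem_slitPlane_of_notMem_segment (disjoint_left.1 hd (hE hz))
  rw [← hasLogOn_div_iff ((hS.union hE₁).union hE₂)]
  refine .union (hS.union hE₁).isClosed hE₂.isClosed ?_
    (.union hS.isClosed hE₁.isClosed ?_ (hasLogOn_div_segment hv hδ) (hlog subset_union_left))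
    (hlog subset_union_right)
  · rw [union_inter_distrib_right, h₂, hE.inter_eq, union_empty]
    exact isPreconnected_singleton
  · rw [h₁]
    exact isPreconnected_singleton

end Crossing

namespace IsFull

open Complex

variable {K A B X E₁ E₂ : Set ℂ} {x p q s₁ s₂ : ℂ}

theorem connectedComponentIn_compl_subset (hK : IsFull K) (hXK : X ⊆ K)
    (hb : Bornology.IsBounded (connectedComponentIn Xᶜ p)) : connectedComponentIn Xᶜ p ⊆ K := by
  intro y hy
  by_contra hyK
  refine hK y hyK (hb.subset ?_)
  rw [connectedComponentIn_eq hy]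
  exact connectedComponentIn_mono y (compl_subset_compl.2 hXK)

theorem mem_connectedComponentIn_compl_union (hK : IsFull K) (hAB : IsCompact (A ∪ B))
    (hABK : A ∪ B ⊆ K) (hB : Disjoint B (closure (connectedComponentIn (interior K) x)))
    (hp : p ∈ connectedComponentIn (interior K) x) (hq : q ∈ connectedComponentIn (interior K) x)
    (hpq : q ∈ connectedComponentIn Aᶜ p) : q ∈ connectedComponentIn (A ∪ B)ᶜ p := by
  have hcompl {y : ℂ} (hy : y ∈ connectedComponentIn (interior K) x)
      (hyA : y ∈ connectedComponentIn Aᶜ p) : y ∈ (A ∪ B)ᶜ := by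
    rintro (h | h)
    · exact connectedComponentIn_subset _ _ hyA h
    · exact disjoint_left.1 hB h (subset_closure hy)
  have hpp : p ∈ connectedComponentIn Aᶜ p :=
    mem_connectedComponentIn (connectedComponentIn_nonempty_iff.1 ⟨q, hpq⟩)
  -- A bounded component of the complement of `A ∪ B` meeting `U` lies in `U`, whose closure misses
  -- `B`; so its frontier lies in `A` alone.
  have hmem {y y' : ℂ} (hy : y ∈ connectedComponentIn (interior K) x)
      (hyA : y ∈ connectedComponentIn Aᶜ p) (hyA' : y' ∈ connectedComponentIn Aᶜ p)
      (hb : Bornology.IsBounded (connectedComponentIn (A ∪ B)ᶜ y)) :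
      y' ∈ connectedComponentIn (A ∪ B)ᶜ y := by
    have hyD := mem_connectedComponentIn (hcompl hy hyA)
    have hDU : connectedComponentIn (A ∪ B)ᶜ y ⊆ connectedComponentIn (interior K) x := by
      rw [connectedComponentIn_eq hy]
      exact isPreconnected_connectedComponentIn.subset_connectedComponentIn hyD
        (interior_maximal (hK.connectedComponentIn_compl_subset hABK hb)
          hAB.isClosed.isOpen_compl.connectedComponentIn)
    by_contra hyD'
    obtain ⟨z, hzA, hzD⟩ := inter_frontier_nonempty_of_isPreconnected
      isPreconnected_connectedComponentIn ⟨y, hyA, hyD⟩ ⟨y', hyA', hyD'⟩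
    rcases frontier_connectedComponentIn_compl_subset hAB.isClosed y hzD with h | h
    · exact connectedComponentIn_subset _ _ hzA h
    · exact disjoint_left.1 hB h (closure_mono hDU hzD.1)
  by_contra h
  rcases isBounded_connectedComponentIn_compl_or (by simp) hAB.isBounded h with hb | hb
  · exact h (hmem hp hpp hpq hb)
  · rw [← connectedComponentIn_eq (hmem hq hpq hpp hb)] at h
    exact h (mem_connectedComponentIn (hcompl hq hpq))

theorem not_isPreconnected_union (hK : IsFull K) (hE₁ : IsCompact E₁) (hE₂ : IsCompact E₂)
    (hB : IsCompact B) (hE : Disjoint E₁ E₂) (h₁ : segment ℝ s₁ s₂ ∩ E₁ = {s₁})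
    (h₂ : segment ℝ s₁ s₂ ∩ E₂ = {s₂})
    (hU : segment ℝ s₁ s₂ ⊆ connectedComponentIn (interior K) x) (hLK : E₁ ∪ E₂ ∪ B ⊆ K)
    (hBU : Disjoint B (closure (connectedComponentIn (interior K) x))) :
    ¬ IsPreconnected (E₁ ∪ E₂ ∪ B) := by
  intro hL
  obtain ⟨m, v, rfl, rfl⟩ : ∃ m v, s₁ = m - v ∧ s₂ = m + v :=
    ⟨(s₁ + s₂) / 2, (s₂ - s₁) / 2, by ring, by ring⟩
  have hm : m ∈ segment ℝ (m - v) (m + v) := mem_segment_sub_add m v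
  have hs₁ : m - v ∈ E₁ := (h₁.ge rfl).2
  have hs₂ : m + v ∈ E₂ := (h₂.ge rfl).2
  have hv : v ≠ 0 := by
    rintro rfl
    exact disjoint_left.1 hE hs₁ (by simpa using hs₂)
  have hmL : m ∉ E₁ ∪ E₂ ∪ B := by
    rintro ((h | h) | h)
    · exact hv (sub_eq_self.1 (h₁.le ⟨hm, h⟩).symm)
    · exact hv (by simpa using h₂.le ⟨hm, h⟩)
    · exact disjoint_left.1 hBU h (subset_closure (hU hm))
  have hLc : IsCompact (E₁ ∪ E₂ ∪ B) := (hE₁.union hE₂).union hB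
  obtain ⟨ε, hε, hball⟩ := isOpen_iff.1
    (isOpen_interior.connectedComponentIn.inter hLc.isClosed.isOpen_compl) m ⟨hU hm, hmL⟩
  obtain ⟨δ, hδ, hδε⟩ := exists_pos_mul_lt hε ‖v‖
  have hp : m + δ * I * v ∈ ball m ε := by simpa [abs_of_pos hδ, mul_comm] using hδε
  have hq : m - δ * I * v ∈ ball m ε := by simpa [abs_of_pos hδ, mul_comm] using hδε
  have hd : Disjoint (E₁ ∪ E₂ ∪ B) (segment ℝ (m + δ * I * v) (m - δ * I * v)) :=
    disjoint_right.2 fun z hz ↦ (hball ((convex_ball m ε).segment_subset hp hq hz)).2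
  have hSK : segment ℝ (m - v) (m + v) ⊆ K :=
    hU.trans ((connectedComponentIn_subset _ _).trans interior_subset)
  have hX : segment ℝ (m - v) (m + v) ∪ (E₁ ∪ E₂ ∪ B) =
      segment ℝ (m - v) (m + v) ∪ E₁ ∪ E₂ ∪ B := by simp only [union_assoc]
  have hsep := notMem_connectedComponentIn_compl_segment_union hδ hLc hL (.inl (.inl hs₁))
    (.inl (.inr hs₂)) hd
  rw [hX] at hsep
  refine hsep (hK.mem_connectedComponentIn_compl_union
    (hX ▸ (isCompact_segment _ _).union hLc) (hX ▸ union_subset hSK hLK) hBU (hball hp).1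
    (hball hq).1 ?_)
  exact mem_connectedComponentIn_compl_segment_union_union hδ hE₁ hE₂ hE h₁ h₂
    (hd.mono_left subset_union_left)

end IsFull

section Crosscut

theorem exists_mem_Icc_eq_forall_le {α β : Type*} [ConditionallyCompleteLinearOrder α]
    [TopologicalSpace α] [OrderTopology α] [DenselyOrdered α] [LinearOrder β] [TopologicalSpace β]
    [OrderClosedTopology β] {f : α → β} {a b : α} {c : β} (hab : a ≤ b)
    (hf : ContinuousOn f (Icc a b)) (ha : c ≤ f a) (hb : f b ≤ c) :
    ∃ t ∈ Icc a b, f t = c ∧ ∀ s ∈ Icc a t, c ≤ f s := by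
  obtain ⟨t, ⟨ht, htc⟩, hleast⟩ :=
    (isCompact_Icc.of_isClosed_subset (hf.preimage_isClosed_of_isClosed isClosed_Icc isClosed_Iic)
      inter_subset_left).exists_isLeast ⟨b, right_mem_Icc.2 hab, hb⟩
  have heq : f t = c := by
    obtain ⟨s, hs, hsc⟩ := intermediate_value_Icc' ht.1 (hf.mono (Icc_subset_Icc_right ht.2))
      ⟨htc, ha⟩
    rwa [← hs.2.antisymm (hleast ⟨⟨hs.1, hs.2.trans ht.2⟩, hsc.le⟩)]
  refine ⟨t, ht, heq, fun s hs ↦ ?_⟩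
  by_contra! h
  rw [hs.2.antisymm (hleast ⟨⟨hs.1, hs.2.trans ht.2⟩, h.le⟩), heq] at h
  exact h.false

variable {E : Type*} [NormedAddCommGroup E] [NormedSpace ℝ E] {U N N₁ N₂ F : Set E} {y s : E}

theorem segment_inter_eq_singleton_right (hs : s ∈ N) (h : dist y s = infDist y N) :
    segment ℝ y s ∩ N = {s} := by
  refine subset_antisymm (fun p hp ↦ ?_) (singleton_subset_iff.2 ⟨right_mem_segment ℝ y s, hs⟩)
  have hseg := dist_add_dist_of_mem_segment hp.1
  have hle := infDist_le_dist_of_mem (x := y) hp.2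
  exact dist_le_zero.1 (by linarith)

theorem segment_inter_eq_singleton_left (hy : y ∈ F) (hs : s ∈ N) (h : dist y s = infDist y N)
    (hF : ∀ p ∈ F, infDist y N ≤ infDist p N) : segment ℝ y s ∩ F = {y} := by
  refine subset_antisymm (fun p hp ↦ ?_) (singleton_subset_iff.2 ⟨left_mem_segment ℝ y s, hy⟩)
  have hseg := dist_add_dist_of_mem_segment hp.1
  have hle := (hF p hp.2).trans (infDist_le_dist_of_mem hs)
  exact (dist_le_zero.1 (by linarith)).symm

theorem exists_forall_infDist_le_infDist (hU : IsOpen U) (hUc : IsPreconnected U)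
    (hN₁ : IsCompact N₁) (hN₂ : IsClosed N₂) (hN : Disjoint N₁ N₂) (hN₁c : IsPreconnected N₁)
    (h₁ : (N₁ ∩ U).Nonempty) (h₂ : (N₂ ∩ U).Nonempty) :
    ∃ F, IsCompact F ∧ IsPreconnected F ∧ N₁ ⊆ F ∧ F ⊆ N₁ ∪ U ∧ ∃ y ∈ F, 0 < infDist y N₂ ∧
      closedBall y (infDist y N₂) ⊆ U ∧ ∀ p ∈ F, infDist y N₂ ≤ infDist p N₂ := by
  obtain ⟨u₁, hu₁, hu₁U⟩ := h₁
  obtain ⟨u₂, hu₂, hu₂U⟩ := h₂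
  obtain ⟨r, hr, hrN⟩ := hN₁.exists_forall_le' (continuous_infDist_pt N₂).continuousOn
    fun p hp ↦ (hN₂.notMem_iff_infDist_pos ⟨u₂, hu₂⟩).1 (disjoint_left.1 hN hp)
  obtain ⟨γ, hγ⟩ : JoinedIn U u₁ u₂ :=
    (hU.isConnected_iff_isPathConnected.1 ⟨⟨u₁, hu₁U⟩, hUc⟩).joinedIn u₁ hu₁U u₂ hu₂U
  obtain ⟨δ, hδ, hδU⟩ := (isCompact_range γ.continuous).exists_cthickening_subset_open hU
    (range_subset_iff.2 hγ)
  obtain ⟨ε, hε, hεm⟩ := exists_between (lt_min hδ hr)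
  obtain ⟨hεδ, hεr⟩ := lt_min_iff.1 hεm
  -- Follow a path in `U` from `N₁` to `N₂` until it is `ε`-close to `N₂` for the first time.
  obtain ⟨t, -, htε, hlt⟩ : ∃ t ∈ Icc 0 1, infDist (γ t) N₂ = ε ∧
      ∀ s ∈ Icc 0 t, ε ≤ infDist (γ s) N₂ :=
    exists_mem_Icc_eq_forall_le zero_le_one
      ((continuous_infDist_pt N₂).comp γ.continuous).continuousOn
      (by simpa using hεr.le.trans (hrN _ hu₁)) (by simpa [infDist_zero_of_mem hu₂] using hε.le)
  refine ⟨N₁ ∪ γ '' Icc 0 t, hN₁.union (isCompact_Icc.image γ.continuous),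
    hN₁c.union u₁ hu₁ ⟨0, by simp⟩ (isPreconnected_Icc.image _ γ.continuous.continuousOn),
    subset_union_left, union_subset_union_right _ (image_subset_iff.2 fun s _ ↦ hγ s),
    γ t, .inr ⟨t, by simp⟩, ?_, ?_, ?_⟩ <;> rw [htε]
  · exact hε
  · exact (closedBall_subset_cthickening (mem_range_self t) ε).trans
      ((cthickening_mono hεδ.le _).trans hδU)
  · rintro p (hp | ⟨s, hs, rfl⟩)
    · exact hεr.le.trans (hrN p hp)
    · exact hlt s hs

theorem exists_segment_inter_eq_singleton (hU : IsOpen U) (hUc : IsPreconnected U)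
    (hN₁ : IsCompact N₁) (hN₂ : IsCompact N₂) (hN : Disjoint N₁ N₂) (hN₁c : IsPreconnected N₁)
    (h₁ : (N₁ ∩ U).Nonempty) (h₂ : (N₂ ∩ U).Nonempty) :
    ∃ (F : Set E) (s₁ s₂ : E), IsCompact F ∧ IsPreconnected F ∧ N₁ ⊆ F ∧ F ⊆ N₁ ∪ U ∧
      Disjoint F N₂ ∧ segment ℝ s₁ s₂ ⊆ U ∧ segment ℝ s₁ s₂ ∩ F = {s₁} ∧
      segment ℝ s₁ s₂ ∩ N₂ = {s₂} := by
  obtain ⟨F, hFc, hFp, hN₁F, hFU, y, hy, hpos, hball, hF⟩ :=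
    exists_forall_infDist_le_infDist hU hUc hN₁ hN₂.isClosed hN hN₁c h₁ h₂
  obtain ⟨s, hs, hsd⟩ := hN₂.exists_infDist_eq_dist h₂.left y
  refine ⟨F, y, s, hFc, hFp, hN₁F, hFU, disjoint_left.2 fun p hp hp₂ ↦ ?_,
    ((convex_closedBall _ _).segment_subset (mem_closedBall_self hpos.le)
      (mem_closedBall'.2 hsd.ge)).trans hball,
    segment_inter_eq_singleton_left hy hs hsd.symm hF,
    segment_inter_eq_singleton_right hs hsd.symm⟩
  exact (hpos.trans_le (hF p hp)).ne' (infDist_zero_of_mem hp₂)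

end Crosscut

section LocallyConnected

variable {X : Type*} [TopologicalSpace X] {K F T U : Set X} {a z : X}

theorem locallyConnectedSpace_coe
    (h : ∀ z ∈ K, ∀ U ∈ 𝓝 z, ∃ V ∈ 𝓝 z, V ⊆ U ∧ IsPreconnected (V ∩ K)) :
    LocallyConnectedSpace K := by
  refine locallyConnectedSpace_iff_connected_subsets.2 fun z W hW ↦ ?_
  obtain ⟨U, hU, hUW⟩ := mem_nhds_induced _ z W |>.1 hW
  obtain ⟨V, hV, hVU, hVK⟩ := h z z.2 U hU
  refine ⟨(↑) ⁻¹' V, preimage_coe_mem_nhds_subtype.2 (mem_nhdsWithin_of_mem_nhds hV),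
    ?_, (preimage_mono hVU).trans hUW⟩
  rw [← IsInducing.subtypeVal.isPreconnected_image, Subtype.image_preimage_coe, inter_comm]
  exact hVK

theorem exists_mem_nhdsWithin_isPreconnected [LocallyConnectedSpace K] (hz : z ∈ K)
    (hU : U ∈ 𝓝 z) : ∃ T ∈ 𝓝[K] z, IsPreconnected T ∧ T ⊆ K ∩ U := by
  obtain ⟨V, hV, hVc, hVU⟩ := locallyConnectedSpace_iff_connected_subsets.1 ‹_› ⟨z, hz⟩ _
    (preimage_coe_mem_nhds_subtype.2 (mem_nhdsWithin_of_mem_nhds hU))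
  refine ⟨(↑) '' V, ?_, hVc.image _ continuous_subtype_val.continuousOn, ?_⟩
  · rw [nhdsWithin_eq_map_subtype_coe hz]
    exact image_mem_map hV
  · rintro _ ⟨p, hp, rfl⟩
    exact ⟨p.2, hVU hp⟩

theorem inter_closure_connectedComponentIn_diff_nonempty [LocallyConnectedSpace K]
    (hF : IsClosed F) (hT : IsPreconnected T) (hTK : T ⊆ K) (ha : a ∈ T \ F)
    (h : (T ∩ F).Nonempty) : (T ∩ F ∩ closure (connectedComponentIn (K \ F) a)).Nonempty := by
  obtain ⟨b, hbT, hbF⟩ := h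
  have hT' : IsPreconnected ((↑) ⁻¹' T : Set K) := by
    rwa [← IsInducing.subtypeVal.isPreconnected_image, Subtype.image_preimage_coe,
      inter_eq_self_of_subset_right hTK]
  have haF : (⟨a, hTK ha.1⟩ : K) ∈ ((↑) ⁻¹' F : Set K)ᶜ := ha.2
  obtain ⟨v, hvT, hv⟩ := inter_frontier_nonempty_of_isPreconnected hT'
    ⟨⟨a, hTK ha.1⟩, ha.1, mem_connectedComponentIn haF⟩
    ⟨⟨b, hTK hbT⟩, hbT, fun hb ↦ connectedComponentIn_subset _ _ hb hbF⟩
  refine ⟨v, ⟨hvT, frontier_connectedComponentIn_compl_subset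
    (hF.preimage continuous_subtype_val) _ hv⟩,
    closure_mono ?_ (image_closure_subset_closure_image continuous_subtype_val ⟨v, hv.1, rfl⟩)⟩
  refine (continuous_subtype_val.continuousOn.image_connectedComponentIn_subset haF).trans
    (connectedComponentIn_mono a ?_)
  rintro _ ⟨p, hp, rfl⟩
  exact ⟨p.2, hp⟩

end LocallyConnected

section ChainPath

theorem exists_path_dist_le_of_dist_le_geometric_two {X : Type*} [MetricSpace X] [CompleteSpace X]
    {a b : X} {C : ℝ} (γ : ℕ → Path a b)
    (hγ : ∀ n t, dist (γ n t) (γ (n + 1) t) ≤ C / 2 / 2 ^ n) :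
    ∃ g : Path a b, ∀ n t, dist (γ n t) (g t) ≤ C / 2 ^ n := by
  choose g hg using fun t ↦ cauchySeq_tendsto_of_complete
    (cauchySeq_of_le_geometric_two fun n ↦ hγ n t)
  have hd (n : ℕ) (t : unitInterval) : dist (γ n t) (g t) ≤ C / 2 ^ n :=
    dist_le_of_le_geometric_two_of_tendsto (fun n ↦ hγ n t) (hg t) n
  have hlim : Tendsto (fun n : ℕ ↦ C / 2 ^ n) atTop (𝓝 0) :=
    tendsto_const_nhds.div_atTop (tendsto_pow_atTop_atTop_of_one_lt one_lt_two)
  have hunif : TendstoUniformly (fun n t ↦ γ n t) g atTop := by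
    refine Metric.tendstoUniformly_iff.2 fun η hη ↦ ?_
    filter_upwards [hlim.eventually_lt_const hη] with n hn t
    rw [dist_comm]
    exact (hd n t).trans_lt hn
  exact ⟨⟨⟨g, hunif.continuous (.of_forall fun n ↦ (γ n).continuous)⟩,
    tendsto_nhds_unique (hg 0) (by simp), tendsto_nhds_unique (hg 1) (by simp)⟩, hd⟩

variable {E : Type*} [NormedAddCommGroup E] [NormedSpace ℝ E] {K S T O : Set E} {a b c : E}
  {γ : Path a b} {ε δ r : ℝ}

theorem path_segment_mem (hS : Convex ℝ S) (ha : a ∈ S) (hb : b ∈ S) (t : unitInterval) :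
    Path.segment a b t ∈ S :=
  hS.segment_subset ha hb (Path.range_segment a b ▸ mem_range_self t)

/-- `IsChainPath K ε γ` says that `γ` is a concatenation of straight segments, each of which joins
two points of a connected subset of `K` contained in a ball of radius `ε`. Such a path need not
stay in `K`; these polygonal approximations are refined to obtain paths in `K` in the limit. -/
inductive IsChainPath (K : Set E) (ε : ℝ) : ∀ {a b : E}, Path a b → Prop
  | segment {a b c : E} {T : Set E} (hT : IsPreconnected T) (hTK : T ⊆ K ∩ ball c ε)
      (ha : a ∈ T) (hb : b ∈ T) : IsChainPath K ε (Path.segment a b)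
  | trans {a b c : E} {γ : Path a b} {γ' : Path b c} (h : IsChainPath K ε γ)
      (h' : IsChainPath K ε γ') : IsChainPath K ε (γ.trans γ')

theorem exists_isChainPath [LocallyConnectedSpace K] (hT : IsPreconnected T) (hTK : T ⊆ K)
    (hS : Convex ℝ S) (hTS : T ⊆ S) (hε : 0 < ε) (ha : a ∈ T) (hb : b ∈ T) :
    ∃ γ : Path a b, IsChainPath K ε γ ∧ ∀ t, γ t ∈ S := by
  refine hT.induction₂' (fun a b ↦ ∃ γ : Path a b, IsChainPath K ε γ ∧ ∀ t, γ t ∈ S)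
    (fun a ha ↦ ?_) ?_ ha hb
  · obtain ⟨V, hV, hVc, hVK⟩ := exists_mem_nhdsWithin_isPreconnected (hTK ha) (ball_mem_nhds a hε)
    have haV : a ∈ V := mem_of_mem_nhdsWithin (hTK ha) hV
    filter_upwards [self_mem_nhdsWithin, nhdsWithin_mono a hTK hV] with b hb hbV
    exact ⟨⟨_, .segment hVc hVK haV hbV, path_segment_mem hS (hTS ha) (hTS hb)⟩,
      ⟨_, .segment hVc hVK hbV haV, path_segment_mem hS (hTS hb) (hTS ha)⟩⟩
  · rintro x y z - - - ⟨γ, hγ, h⟩ ⟨γ', hγ', h'⟩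
    refine ⟨γ.trans γ', hγ.trans hγ', fun t ↦ ?_⟩
    rw [Path.trans_apply]
    split_ifs
    · exact h _
    · exact h' _

namespace IsChainPath

theorem exists_refinement [LocallyConnectedSpace K] (h : IsChainPath K ε γ) (hδ : 0 < δ) :
    ∃ γ' : Path a b, IsChainPath K δ γ' ∧ ∀ t, dist (γ t) (γ' t) ≤ 2 * ε := by
  induction h with
  | @segment a b c T hT hTK ha hb =>
    obtain ⟨hTK, hTc⟩ := subset_inter_iff.1 hTK
    obtain ⟨γ', hγ', h⟩ := exists_isChainPath hT hTK (convex_ball c ε) hTc hδ ha hb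
    refine ⟨γ', hγ', fun t ↦ ?_⟩
    have hsegment := path_segment_mem (convex_ball c ε) (hTc ha) (hTc hb) t
    linarith [mem_ball.1 hsegment, mem_ball.1 (h t),
      dist_triangle_right (Path.segment a b t) (γ' t) c]
  | trans _ _ ih ih' =>
    obtain ⟨γ₁, h₁, d₁⟩ := ih
    obtain ⟨γ₂, h₂, d₂⟩ := ih'
    refine ⟨γ₁.trans γ₂, h₁.trans h₂, fun t ↦ ?_⟩
    rw [Path.trans_apply, Path.trans_apply]
    split_ifs
    · exact d₁ _
    · exact d₂ _

theorem exists_dist_le (h : IsChainPath K ε γ) (t : unitInterval) :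
    ∃ y ∈ K, dist y (γ t) ≤ 2 * ε := by
  induction h generalizing t with
  | @segment a b c _ _ hTK ha hb =>
    have hsegment := path_segment_mem (convex_ball c ε) (hTK ha).2 (hTK hb).2 t
    refine ⟨a, (hTK ha).1, ?_⟩
    linarith [mem_ball.1 (hTK ha).2, mem_ball.1 hsegment,
      dist_triangle_right a (Path.segment a b t) c]
  | trans _ _ ih ih' =>
    rw [Path.trans_apply]
    split_ifs
    · exact ih _
    · exact ih' _

theorem exists_seq [LocallyConnectedSpace K] (h : IsChainPath K r γ) (hr : 0 < r) :
    ∃ γ' : ℕ → Path a b, γ' 0 = γ ∧ (∀ n, IsChainPath K (r / 2 ^ n) (γ' n)) ∧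
      ∀ n t, dist (γ' n t) (γ' (n + 1) t) ≤ 4 * r / 2 / 2 ^ n := by
  choose f hf hd using fun (n : ℕ) (γ : {γ : Path a b // IsChainPath K (r / 2 ^ n) γ}) ↦
    γ.2.exists_refinement (show 0 < r / 2 ^ (n + 1) by positivity)
  let γ' (n : ℕ) : {γ : Path a b // IsChainPath K (r / 2 ^ n) γ} :=
    n.rec ⟨γ, by simpa using h⟩ fun n γ ↦ ⟨f n γ, hf n γ⟩
  exact ⟨fun n ↦ (γ' n).1, rfl, fun n ↦ (γ' n).2, fun n t ↦ (hd n (γ' n) t).trans_eq (by ring)⟩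

theorem exists_path [CompleteSpace E] [LocallyConnectedSpace K] (hK : IsClosed K)
    (h : IsChainPath K r γ) (hr : 0 < r) :
    ∃ g : Path a b, ∀ t, g t ∈ K ∧ dist (γ t) (g t) ≤ 4 * r := by
  obtain ⟨γ', rfl, hγ', hd⟩ := h.exists_seq hr
  obtain ⟨g, hg⟩ := exists_path_dist_le_of_dist_le_geometric_two γ' hd
  refine ⟨g, fun t ↦ ⟨?_, by simpa using hg 0 t⟩⟩
  choose y hyK hy using fun n ↦ (hγ' n).exists_dist_le t
  refine hK.mem_of_tendsto (b := atTop) ?_ (.of_forall hyK)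
  refine tendsto_iff_dist_tendsto_zero.2 (squeeze_zero (g := fun n : ℕ ↦ 6 * r / 2 ^ n)
    (fun _ ↦ dist_nonneg) (fun n ↦ ?_)
    (tendsto_const_nhds.div_atTop (tendsto_pow_atTop_atTop_of_one_lt one_lt_two)))
  calc dist (y n) (g t) ≤ dist (y n) (γ' n t) + dist (γ' n t) (g t) := dist_triangle _ _ _
    _ ≤ 2 * (r / 2 ^ n) + 4 * r / 2 ^ n := add_le_add (hy n) (hg n t)
    _ = 6 * r / 2 ^ n := by ring

end IsChainPath

variable [CompleteSpace E] [LocallyConnectedSpace K]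

theorem joinedIn_inter_ball_of_isPreconnected (hK : IsClosed K) (hT : IsPreconnected T)
    (hTK : T ⊆ K ∩ ball c r) (ha : a ∈ T) (hb : b ∈ T) : JoinedIn (K ∩ ball c (5 * r)) a b := by
  obtain ⟨g, hg⟩ := (IsChainPath.segment hT hTK ha hb).exists_path hK
    (pos_of_mem_ball (hTK ha).2)
  refine ⟨g, fun t ↦ ⟨(hg t).1, ?_⟩⟩
  have hsegment := path_segment_mem (convex_ball c r) (hTK ha).2 (hTK hb).2 t
  calc dist (g t) c ≤ dist (Path.segment a b t) (g t) + dist (Path.segment a b t) c :=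
        dist_triangle_left _ _ _
    _ < 4 * r + r := add_lt_add_of_le_of_lt (hg t).2 hsegment
    _ = 5 * r := by ring

theorem joinedIn_inter_of_isPreconnected (hK : IsClosed K) (hT : IsPreconnected T) (hO : IsOpen O)
    (hTK : T ⊆ K ∩ O) (ha : a ∈ T) (hb : b ∈ T) : JoinedIn (K ∩ O) a b := by
  refine hT.induction₂ (JoinedIn (K ∩ O)) (fun a ha ↦ ?_)
    (fun _ _ _ _ _ _ h h' ↦ h.trans h') (fun _ _ _ _ h ↦ h.symm) ha hb
  obtain ⟨ρ, hρ, hball⟩ := Metric.isOpen_iff.1 hO a (hTK ha).2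
  have haK : a ∈ K := (hTK ha).1
  obtain ⟨V, hV, hVc, hVK⟩ := exists_mem_nhdsWithin_isPreconnected haK
    (ball_mem_nhds a (show 0 < ρ / 5 by positivity))
  have haV : a ∈ V := mem_of_mem_nhdsWithin haK hV
  filter_upwards [nhdsWithin_mono a (hTK.trans inter_subset_left) hV] with b hbV
  have hjoined := joinedIn_inter_ball_of_isPreconnected hK hVc hVK haV hbV
  rw [mul_div_cancel₀ ρ (by norm_num)] at hjoined
  exact hjoined.mono (inter_subset_inter_right K hball)

end ChainPath

section Endpoints

theorem exists_isCompact_isPreconnected_inter_nonempty {X : Type*} [MetricSpace X] [ProperSpace X]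
    {K : Set X} [LocallyConnectedSpace K] (hK : IsClosed K) {w : X} (hw : w ∈ K) {r : ℝ}
    (hr : 0 < r) :
    ∃ N, IsCompact N ∧ IsPreconnected N ∧ N ⊆ K ∩ closedBall w r ∧
      ∀ S ⊆ K, w ∈ closure S → (N ∩ S).Nonempty := by
  obtain ⟨T, hT, hTc, hTK⟩ := exists_mem_nhdsWithin_isPreconnected hw (closedBall_mem_nhds w hr)
  have hN : closure T ⊆ K ∩ closedBall w r := closure_minimal hTK (hK.inter isClosed_closedBall)
  refine ⟨closure T, (isCompact_closedBall w r).of_isClosed_subset isClosed_closure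
    (hN.trans inter_subset_right), hTc.closure, hN, fun S hS hwS ↦ ?_⟩
  have := mem_closure_iff_nhdsWithin_neBot.1 hwS
  exact (Filter.nonempty_of_mem (inter_mem (nhdsWithin_mono w hS hT) self_mem_nhdsWithin)).mono
    (inter_subset_inter_left S subset_closure)

theorem exists_isPathIn_of_joinedIn {S : Set ℂ} {a b : ℂ} (h : JoinedIn S a b) :
    ∃ γ, IsPathIn S γ a b := by
  obtain ⟨γ, hγ⟩ := h
  refine ⟨γ.extend, γ.continuous_extend.continuousOn, γ.extend_zero, γ.extend_one, ?_⟩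
  rintro _ ⟨t, ht, rfl⟩
  rw [γ.extend_apply ht]
  exact hγ _

theorem exists_isPathIn_sdiff_singleton {K A B : Set ℂ} {a b v w : ℂ} [LocallyConnectedSpace K]
    (hK : IsClosed K) (hA : IsPreconnected A) (hB : IsPreconnected B) (hAK : A ⊆ K \ {v})
    (hBK : B ⊆ K \ {v}) (ha : a ∈ A) (hb : b ∈ B) (hwA : w ∈ closure A) (hwB : w ∈ closure B)
    (hwv : w ≠ v) : ∃ γ, IsPathIn (K \ {v}) γ a b := by
  have hw : w ∈ K \ {v} := ⟨closure_minimal (hAK.trans sdiff_subset) hK hwA, hwv⟩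
  have hAw : IsPreconnected (insert w A) :=
    hA.subset_closure (subset_insert w A) (insert_subset hwA subset_closure)
  have hBw : IsPreconnected (insert w B) :=
    hB.subset_closure (subset_insert w B) (insert_subset hwB subset_closure)
  exact exists_isPathIn_of_joinedIn (joinedIn_inter_of_isPreconnected hK
    (hAw.union w (mem_insert w A) (mem_insert w B) hBw) isOpen_compl_singleton
    (union_subset (insert_subset hw hAK) (insert_subset hw hBK))
    (.inl (.inr ha)) (.inr (.inr hb)))

end Endpoints

namespace IsFull

variable {K C : Set ℂ} {x z' : ℂ} [LocallyConnectedSpace K]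

theorem subsingleton_closure_inter_closure (hfull : IsFull K) (hK : IsClosed K)
    (hC : IsPreconnected C) (hCK : C ⊆ K \ closure (connectedComponentIn (interior K) x)) :
    (closure C ∩ closure (connectedComponentIn (interior K) x)).Subsingleton := by
  rintro w₁ ⟨h₁C, h₁U⟩ w₂ ⟨h₂C, h₂U⟩
  by_contra hne
  set U := connectedComponentIn (interior K) x
  have hUK : U ⊆ K := (connectedComponentIn_subset _ _).trans interior_subset
  have hCK' : C ⊆ K := hCK.trans sdiff_subset
  have hr : 0 < dist w₁ w₂ / 3 := div_pos (dist_pos.2 hne) three_pos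
  obtain ⟨N₁, h₁c, h₁p, h₁K, h₁⟩ := exists_isCompact_isPreconnected_inter_nonempty hK
    (closure_minimal hUK hK h₁U) hr
  obtain ⟨N₂, h₂c, h₂p, h₂K, h₂⟩ := exists_isCompact_isPreconnected_inter_nonempty hK
    (closure_minimal hUK hK h₂U) hr
  have hN : Disjoint N₁ N₂ :=
    (closedBall_disjoint_closedBall (by linarith)).mono (h₁K.trans inter_subset_right)
      (h₂K.trans inter_subset_right)
  obtain ⟨F, s₁, s₂, hFc, hFp, hN₁F, hFN, hFN₂, hsU, hs₁, hs₂⟩ :=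
    exists_segment_inter_eq_singleton isOpen_interior.connectedComponentIn
      isPreconnected_connectedComponentIn h₁c h₂c hN h₁p (h₁ U hUK h₁U) (h₂ U hUK h₂U)
  obtain ⟨c₁, hc₁, hc₁C⟩ := h₁ C hCK' h₁C
  obtain ⟨c₂, hc₂, hc₂C⟩ := h₂ C hCK' h₂C
  -- The segment, `F`, `N₂` and a path in `K` missing `closure U` close up to a loop crossed once by
  -- the bisector of the segment.
  obtain ⟨β, hβ⟩ : JoinedIn (K ∩ (closure U)ᶜ) c₁ c₂ :=
    joinedIn_inter_of_isPreconnected hK hC isClosed_closure.isOpen_compl hCK hc₁C hc₂C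
  have hFβ : IsPreconnected (F ∪ range β) :=
    hFp.union c₁ (hN₁F hc₁) ⟨0, by simp⟩ (isPreconnected_range β.continuous)
  refine hfull.not_isPreconnected_union hFc h₂c (isCompact_range β.continuous) hFN₂ hs₁ hs₂ hsU
    (union_subset (union_subset ?_ (h₂K.trans inter_subset_left))
      (range_subset_iff.2 fun t ↦ (hβ t).1))
    (disjoint_left.2 (forall_mem_range.2 fun t ↦ (hβ t).2)) ?_
  · exact hFN.trans (union_subset (h₁K.trans inter_subset_left) hUK)
  · rw [union_right_comm]
    exact hFβ.union c₂ (.inr ⟨1, by simp⟩) hc₂ h₂p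

theorem exists_forall_mem_of_isPreconnected (hfull : IsFull K) (hK : IsClosed K)
    (hconn : IsPreconnected K) (hz' : z' ∈ K \ closure (connectedComponentIn (interior K) x))
    (hU : (connectedComponentIn (interior K) x).Nonempty) :
    ∃ w ∈ closure (connectedComponentIn (interior K) x),
      w ∈ closure (connectedComponentIn (K \ closure (connectedComponentIn (interior K) x)) z') ∧
      ∀ T ⊆ K, IsPreconnected T → z' ∈ T →
        (T ∩ closure (connectedComponentIn (interior K) x)).Nonempty → w ∈ T := by
  set U := connectedComponentIn (interior K) x
  have hUK : closure U ⊆ K :=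
    closure_minimal ((connectedComponentIn_subset _ _).trans interior_subset) hK
  obtain ⟨w, ⟨-, hwU⟩, hwC⟩ := inter_closure_connectedComponentIn_diff_nonempty isClosed_closure
    hconn subset_rfl hz' (hU.closure.mono (subset_inter hUK subset_rfl))
  refine ⟨w, hwU, hwC, fun T hTK hT hz'T hTU ↦ ?_⟩
  obtain ⟨v, ⟨hvT, hvU⟩, hvC⟩ := inter_closure_connectedComponentIn_diff_nonempty isClosed_closure
    hT hTK ⟨hz'T, hz'.2⟩ hTU
  rwa [hfull.subsingleton_closure_inter_closure hK isPreconnected_connectedComponentIn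
    (connectedComponentIn_subset _ _) ⟨hwC, hwU⟩ ⟨hvC, hvU⟩]

end IsFull

theorem projection_onto_interior_component_general (K : Set ℂ) [LocallyConnectedSpace K]
    (hK : IsClosed K) (hconn : IsPreconnected K) (hfull : IsFull K) (x z z' : ℂ)
    (hz : z ∈ interior (closure (connectedComponentIn (interior K) x)))
    (hz' : z' ∈ K \ closure (connectedComponentIn (interior K) x)) :
    ∃ w ∈ frontier (closure (connectedComponentIn (interior K) x)),
      (∀ γ : ℝ → ℂ, IsPathIn K γ z' z → w ∈ γ '' Icc 0 1) ∧
      (∀ w' ∈ frontier (closure (connectedComponentIn (interior K) x)),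
        (∀ γ : ℝ → ℂ, IsPathIn K γ z' z → w' ∈ γ '' Icc 0 1) → w' = w) ∧
      ¬ IsPreconnected (K \ {w}) ∧
      connectedComponentIn (K \ {w}) z ≠ connectedComponentIn (K \ {w}) z' := by
  have hint := interior_closure_connectedComponentIn_interior hK x
  set U := connectedComponentIn (interior K) x
  set C := connectedComponentIn (K \ closure U) z'
  have hzU : z ∈ U := hint.le hz
  have hUK : U ⊆ K := (connectedComponentIn_subset _ _).trans interior_subset
  have hCU : C ⊆ K \ closure U := connectedComponentIn_subset _ _
  obtain ⟨w, hwU, hwC, hw⟩ := hfull.exists_forall_mem_of_isPreconnected hK hconn hz' ⟨z, hzU⟩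
  have hmem {T : Set ℂ} (hTK : T ⊆ K) (hT : IsPreconnected T) (hz'T : z' ∈ T) (hzT : z ∈ T) :
      w ∈ T := hw T hTK hT hz'T ⟨z, hzT, interior_subset hz⟩
  have hwf : w ∈ frontier (closure U) := by
    rw [frontier_eq_closure_inter_closure, closure_closure]
    exact ⟨hwU, closure_mono (fun p hp ↦ (hCU hp).2) hwC⟩
  have hzw : z ∈ K \ {w} := ⟨hUK hzU, fun h ↦ hwf.2 (h ▸ hz)⟩
  have hz'w : z' ∈ K \ {w} := ⟨hz'.1, fun h ↦ hz'.2 (h ▸ hwU)⟩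
  refine ⟨w, hwf, ?_, fun w' hw' hγ ↦ ?_, fun h ↦ (hmem sdiff_subset h hz'w hzw).2 rfl, fun h ↦ ?_⟩
  · rintro γ ⟨hγ, h0, h1, hγK⟩
    exact hmem hγK (isPreconnected_Icc.image γ hγ) ⟨0, by simp, h0⟩ ⟨1, by simp, h1⟩
  · by_contra hne
    rw [isClosed_closure.frontier_eq, hint] at hw'
    obtain ⟨γ, hγc, h0, h1, hγK⟩ := exists_isPathIn_sdiff_singleton hK
      isPreconnected_connectedComponentIn isPreconnected_connectedComponentIn
      (subset_sdiff_singleton (hCU.trans sdiff_subset) fun h ↦ (hCU h).2 hw'.1)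
      (subset_sdiff_singleton hUK hw'.2) (mem_connectedComponentIn hz') hzU hwC hwU
      (Ne.symm hne)
    exact (hγK (hγ γ ⟨hγc, h0, h1, hγK.trans sdiff_subset⟩)).2 rfl
  · have hsub := connectedComponentIn_subset (K \ {w}) z
    exact (hsub (hmem (hsub.trans sdiff_subset) isPreconnected_connectedComponentIn
      (h ▸ mem_connectedComponentIn hz'w) (mem_connectedComponentIn hzw))).2 rfl

/-- Let `K ⊂ ℂ` be compact, connected, full and locally connected, and let `K₀` be the
closure of a connected component of the interior of `K`. For any `z` in the interior of
`K₀` and any `z' ∈ K ∖ K₀` there is a unique point `w ∈ ∂K₀` through which every path in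
`K` from `z'` to `z` passes; moreover `w` disconnects `K`, with `z` and `z'` in different
connected components of `K ∖ {w}`. -/
theorem projection_onto_interior_component (K : Set ℂ)
    (hK : IsCompact K) (hconn : IsConnected K) (hfull : IsFull K)
    (hlc : ∀ z ∈ K, ∀ U ∈ nhds z, ∃ V ∈ nhds z, V ⊆ U ∧ IsConnected (V ∩ K))
    (x : ℂ) (hx : x ∈ interior K)
    (K₀ : Set ℂ) (hK₀ : K₀ = closure (connectedComponentIn (interior K) x))
    (z : ℂ) (hz : z ∈ interior K₀) (z' : ℂ) (hz' : z' ∈ K \ K₀) :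
    ∃ w ∈ frontier K₀,
      (∀ γ : ℝ → ℂ, IsPathIn K γ z' z → w ∈ γ '' Set.Icc 0 1) ∧
      (∀ w' ∈ frontier K₀,
        (∀ γ : ℝ → ℂ, IsPathIn K γ z' z → w' ∈ γ '' Set.Icc 0 1) → w' = w) ∧
      ¬ IsPreconnected (K \ {w}) ∧
      connectedComponentIn (K \ {w}) z ≠ connectedComponentIn (K \ {w}) z' := by
  have := locallyConnectedSpace_coe (K := K) fun z hz U hU ↦
    (hlc z hz U hU).imp fun _ h ↦ h.imp_right (And.imp_right IsConnected.isPreconnected)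
  subst hK₀
  exact projection_onto_interior_component_general K hK.isClosed hconn.isPreconnected hfull x z z'
    hz hz'
end

section
/- Let K ⊂ ℂ be compact, connected, full, and locally connected. Then the closure of any connected component of the interior of K has locally connected boundary. -/
open Set Metric Filter Topology

/-!
If the boundary `L` of the component is not locally connected at `z`, components of `L` intersected
with small closed discs about `z` yield infinitely many disjoint continua in `L` joining every
neighbourhood of `z` to every neighbourhood of a second point `b`. Take three of them. Local
connectedness of `K` makes the small neighbourhoods of `z` and of `b` in `K` connected, so that they
serve as hubs meeting all three continua; since `L` lies in the closure of the connected complement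
of `K`, a path in the complement passing close to all three is a third hub. Thickening everything
slightly draws `K₃,₃` in the plane.

That `K₃,₃` is not planar is seen by comparing logarithms: if `p` and `q` are disjoint paths, then
`p s - q t` has a continuous logarithm on the square, whose variation around the boundary vanishes.
Summed over disjoint pairs of edges, these relations exponentiate to `-1 = 1`.

The boundary of the component is connected because it is the intersection of two closed connected
sets covering the plane, which is unicoherent.
-/

section Logarithm

theorem exists_continuous_exp_eq {X : Type*} [TopologicalSpace X] [SimplyConnectedSpace X]
    [LocallyPathConnectedSpace X] {f : X → ℂ} (hf : Continuous f) (h0 : ∀ x, f x ≠ 0) :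
    ∃ g : X → ℂ, Continuous g ∧ ∀ x, Complex.exp (g x) = f x := by
  let x₀ : X := Classical.arbitrary X
  obtain ⟨g, ⟨-, hg⟩, -⟩ := Complex.isCoveringMapOn_exp.existsUnique_continuousMap_lifts
    ⟨f, hf⟩ (a₀ := x₀) (e₀ := Complex.log (f x₀)) (Complex.exp_log (h0 x₀)) h0
  exact ⟨g, g.continuous, congrFun hg⟩

theorem sub_eq_sub_of_exp_eqOn {X : Type*} [TopologicalSpace X] {s : Set X} {f g : X → ℂ}
    (hs : IsPreconnected s) (hf : ContinuousOn f s) (hg : ContinuousOn g s)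
    (h : ∀ x ∈ s, Complex.exp (f x) = Complex.exp (g x)) {x y : X} (hx : x ∈ s) (hy : y ∈ s) :
    f x - f y = g x - g y := by
  have hone : ∀ z ∈ s, Complex.exp (f z - g z) = 1 := fun z hz => by
    rw [Complex.exp_sub, h z hz, div_self (Complex.exp_ne_zero _)]
  have hconst : f x - g x = f y - g y :=
    Complex.isCoveringMap_exp.constOn_of_comp hs (hf.sub hg)
      (fun a ha b hb => Subtype.ext ((hone a ha).trans (hone b hb).symm)) hx hy
  linear_combination hconst

open Classical in
/-- The variation of a continuous logarithm of `f` along `[0, 1]`, a refined winding number.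
The value is `0` if `f` has no continuous logarithm. -/
noncomputable def logVariation (f : ℝ → ℂ) : ℂ :=
  if h : ∃ g : ℝ → ℂ, Continuous g ∧ ∀ t, Complex.exp (g t) = f t then
    h.choose 1 - h.choose 0
  else 0

theorem logVariation_eq {f g : ℝ → ℂ} (hg : Continuous g) (h : ∀ t, Complex.exp (g t) = f t) :
    logVariation f = g 1 - g 0 := by
  have hex : ∃ g : ℝ → ℂ, Continuous g ∧ ∀ t, Complex.exp (g t) = f t := ⟨g, hg, h⟩
  rw [logVariation, dif_pos hex]
  exact sub_eq_sub_of_exp_eqOn isPreconnected_univ hex.choose_spec.1.continuousOn hg.continuousOn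
    (fun t _ => (hex.choose_spec.2 t).trans (h t).symm) (mem_univ 1) (mem_univ 0)

theorem exp_logVariation {f : ℝ → ℂ} (hf : Continuous f) (h0 : ∀ t, f t ≠ 0) :
    Complex.exp (logVariation f) = f 1 / f 0 := by
  obtain ⟨g, hg, hgf⟩ := exists_continuous_exp_eq hf h0
  rw [logVariation_eq hg hgf, Complex.exp_sub, hgf, hgf]

theorem logVariation_neg {f : ℝ → ℂ} (hf : Continuous f) (h0 : ∀ t, f t ≠ 0) :
    logVariation (-f) = logVariation f := by
  obtain ⟨g, hg, hgf⟩ := exists_continuous_exp_eq hf h0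
  have hneg : ∀ t, Complex.exp (g t + Real.pi * Complex.I) = (-f) t := fun t => by
    rw [Complex.exp_add, hgf, Complex.exp_pi_mul_I, mul_neg_one, Pi.neg_apply]
  rw [logVariation_eq (by fun_prop) hneg, logVariation_eq hg hgf]
  ring

theorem logVariation_add_eq_add {F : ℝ × ℝ → ℂ} (hF : Continuous F) (h0 : ∀ p, F p ≠ 0) :
    logVariation (fun s => F (s, 0)) + logVariation (fun t => F (1, t)) =
      logVariation (fun t => F (0, t)) + logVariation (fun s => F (s, 1)) := by
  obtain ⟨G, hG, hGF⟩ := exists_continuous_exp_eq hF h0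
  rw [logVariation_eq (g := fun s => G (s, 0)) (by fun_prop) fun _ => hGF _,
    logVariation_eq (g := fun t => G (1, t)) (by fun_prop) fun _ => hGF _,
    logVariation_eq (g := fun t => G (0, t)) (by fun_prop) fun _ => hGF _,
    logVariation_eq (g := fun s => G (s, 1)) (by fun_prop) fun _ => hGF _]
  ring

end Logarithm

section CompleteBipartite

-- Adding the relations with `k = i + 1` cancels `b` cyclically.
theorem sum_sub_eq_zero_of_exchange {R : Type*} [CommRing R] [NoZeroDivisors R] [CharZero R]
    {a b : Fin 3 → Fin 3 → Fin 3 → R}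
    (h : ∀ i j k l, i ≠ k → j ≠ l → a i j k + b k l j = a k l i + b i j l) :
    ∑ i, ∑ j, (a i j (i + 1) - a (i + 1) j i) = 0 := by
  have hsum : ∑ i, ∑ j, ∑ l with j ≠ l, (a i j (i + 1) + b (i + 1) l j) =
      ∑ i, ∑ j, ∑ l with j ≠ l, (a (i + 1) l i + b i j l) :=
    Finset.sum_congr rfl fun i _ => Finset.sum_congr rfl fun j _ => Finset.sum_congr rfl fun l hl =>
      h i j (i + 1) l (by simp) (by simpa using hl)
  simp only [Finset.sum_filter, Fin.sum_univ_three, ne_eq, ite_not, ↓reduceIte, zero_ne_one,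
    one_ne_zero, Fin.isValue, Fin.reduceEq, Fin.reduceAdd, zero_add, add_zero] at hsum
  simp only [Fin.sum_univ_three, Fin.isValue, Fin.reduceAdd, zero_add]
  refine mul_left_cancel₀ (two_ne_zero' R) ?_
  linear_combination hsum

theorem prod_neg_div_eq_neg_one {𝕜 : Type*} [Field 𝕜] {a : Fin 3 → Fin 3 → 𝕜}
    (ha : ∀ i j, a i j ≠ 0) : ∏ i, ∏ j, -(a (i + 1) j / a i j) = -1 := by
  have hcycle : ∀ j, ∏ i, -(a (i + 1) j / a i j) = -1 := fun j => by
    have := ha 0 j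
    have := ha 1 j
    have := ha 2 j
    simp only [Fin.prod_univ_three, Fin.isValue, Fin.reduceAdd, zero_add]
    field_simp
  rw [Finset.prod_comm, Finset.prod_congr rfl fun j _ => hcycle j]
  norm_num

theorem not_pairwise_ne_of_completeBipartite {e : Fin 3 → Fin 3 → ℝ → ℂ} {u v : Fin 3 → ℂ}
    (he : ∀ i j, Continuous (e i j)) (hu : ∀ i j, e i j 0 = u i) (hv : ∀ i j, e i j 1 = v j) :
    ¬ ∀ i j k l, i ≠ k → j ≠ l → ∀ s t, e i j s ≠ e k l t := by
  intro hne
  have hne_u : ∀ i j k, i ≠ k → ∀ s, e i j s - u k ≠ 0 := fun i j k hik s =>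
    sub_ne_zero.2 <| hu k (j + 1) ▸ hne i j k (j + 1) hik (by simp) s 0
  have hne_v : ∀ i j l, j ≠ l → ∀ s, e i j s - v l ≠ 0 := fun i j l hjl s =>
    sub_ne_zero.2 <| hv (i + 1) l ▸ hne i j (i + 1) l (by simp) hjl s 1
  let a := fun i j k => logVariation fun s => e i j s - u k
  let b := fun i j l => logVariation fun s => e i j s - v l
  have hexchange : ∀ i j k l, i ≠ k → j ≠ l → a i j k + b k l j = a k l i + b i j l := by
    intro i j k l hik hjl
    have hsquare := logVariation_add_eq_add (F := fun p => e i j p.1 - e k l p.2) (by fun_prop)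
      fun p => sub_ne_zero.2 (hne i j k l hik hjl p.1 p.2)
    have hb := logVariation_neg (by fun_prop) (hne_v k l j hjl.symm)
    have ha := logVariation_neg (by fun_prop) (hne_u k l i hik.symm)
    simpa only [a, b, ← hb, ← ha, Pi.neg_def, neg_sub, hu, hv] using hsquare
  have hvu : ∀ i j, v j - u i ≠ 0 := fun i j =>
    hv (i + 1) j ▸ hne_u (i + 1) j i (by simp) 1
  have hexp : ∀ i j, Complex.exp (a i j (i + 1) - a (i + 1) j i) =
      -((v j - u (i + 1)) / (v j - u i)) := by
    intro i j
    have hi : i ≠ i + 1 := by simp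
    have huu : u i - u (i + 1) ≠ 0 := hu i j ▸ hne_u i j (i + 1) hi 0
    have hvu_ij := hvu i j
    rw [Complex.exp_sub, exp_logVariation (by fun_prop) (hne_u i j (i + 1) hi),
      exp_logVariation (by fun_prop) (hne_u (i + 1) j i hi.symm), hu, hu, hv, hv]
    field_simp
    ring
  have hprod := congrArg Complex.exp (sum_sub_eq_zero_of_exchange hexchange)
  simp only [Complex.exp_sum, hexp, Complex.exp_zero] at hprod
  rw [prod_neg_div_eq_neg_one hvu] at hprod
  norm_num at hprod

theorem not_disjoint_of_joinedIn_completeBipartite {u v : Fin 3 → ℂ} {S : Fin 3 → Fin 3 → Set ℂ}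
    (hS : ∀ i j, JoinedIn (S i j) (u i) (v j)) :
    ¬ ∀ i j k l, i ≠ k → j ≠ l → Disjoint (S i j) (S k l) := by
  intro hd
  choose γ hγ using hS
  have hmem : ∀ i j s, (γ i j).extend s ∈ S i j := fun i j s => hγ i j (projIcc 0 1 zero_le_one s)
  exact not_pairwise_ne_of_completeBipartite (fun i j => (γ i j).continuous_extend)
    (fun i j => (γ i j).extend_zero) (fun i j => (γ i j).extend_one)
    fun i j k l hik hjl s t => (hd i j k l hik hjl).ne_of_mem (hmem i j s) (hmem k l t)

end CompleteBipartite

section Hubs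

theorem not_forall_joinedIn_of_pairwise_disjoint {H N : Fin 3 → Set ℂ} {v : Fin 3 → ℂ}
    (hH : ∀ i, IsPathConnected (H i)) (hHd : Pairwise (Function.onFun Disjoint H))
    (hNd : Pairwise (Function.onFun Disjoint N)) :
    ¬ ∀ i j, ∃ x ∈ H i, JoinedIn (N j \ ⋃ k ≠ i, H k) x (v j) := by
  intro h
  choose x hx hxv using h
  refine not_disjoint_of_joinedIn_completeBipartite (u := fun i => x i 0) (v := v)
    (S := fun i j => H i ∪ N j \ ⋃ k ≠ i, H k) (fun i j => ?_) fun i j k l hik hjl => ?_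
  · exact (((hH i).joinedIn _ (hx i 0) _ (hx i j)).mono subset_union_left).trans
      ((hxv i j).mono subset_union_right)
  · have hHN : ∀ i k l, i ≠ k → Disjoint (H i) (N l \ ⋃ k' ≠ k, H k') := fun i k l hik =>
      disjoint_sdiff_right.mono_left (subset_biUnion_of_mem (u := H) hik)
    simp only [disjoint_union_left, disjoint_union_right]
    exact ⟨⟨hHd hik, (hHN k i j hik.symm).symm⟩, hHN i k l hik,
      (hNd hjl).mono sdiff_subset sdiff_subset⟩

theorem exists_Icc_disjoint_Ioc_disjoint_Ico {α : Type*} [ConditionallyCompleteLinearOrder α]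
    [TopologicalSpace α] [OrderTopology α] {F₁ F₂ : Set α} (hF₁ : IsClosed F₁)
    (hF₂ : IsClosed F₂) {a b : α} (ha : a ∈ F₁) (hb : b ∈ F₂) (hab : a ≤ b) :
    ∃ s ∈ F₁, ∃ t ∈ F₂, a ≤ s ∧ s ≤ t ∧ t ≤ b ∧
      Disjoint (Ioc s t) F₁ ∧ Disjoint (Ico s t) F₂ := by
  obtain ⟨t, ht, htmin⟩ := (isCompact_Icc (a := a) (b := b)).inter_right hF₂
    |>.exists_isLeast ⟨b, ⟨hab, le_rfl⟩, hb⟩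
  obtain ⟨s, hs, hsmax⟩ := (isCompact_Icc (a := a) (b := t)).inter_right hF₁
    |>.exists_isGreatest ⟨a, ⟨le_rfl, ht.1.1⟩, ha⟩
  refine ⟨s, hs.2, t, ht.2, hs.1.1, hs.1.2, ht.1.2, disjoint_left.2 fun r hr hrF => ?_,
    disjoint_left.2 fun r hr hrF => ?_⟩
  · exact hr.1.not_ge (hsmax ⟨⟨hs.1.1.trans hr.1.le, hr.2⟩, hrF⟩)
  · exact hr.2.not_ge (htmin ⟨⟨hs.1.1.trans hr.1, hr.2.le.trans ht.1.2⟩, hrF⟩)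

theorem exists_mem_level_joinedIn_diff {X : Type*} [TopologicalSpace X] {T G₁ G₂ : Set X}
    {h : X → ℝ} {m : ℝ} {x y : X} (hG₁ : IsClosed G₁) (hG₂ : IsClosed G₂) (hh : Continuous h)
    (h₁ : ∀ w ∈ G₁, h w < m) (h₂ : ∀ w ∈ G₂, m < h w) (hT : JoinedIn T x y) (hx : x ∈ G₁)
    (hy : y ∈ G₂) :
    ∃ p ∈ T, h p = m ∧ (∃ x' ∈ G₁, JoinedIn (T \ G₂) x' p) ∧
      ∃ y' ∈ G₂, JoinedIn (T \ G₁) y' p := by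
  obtain ⟨γ, hγ⟩ := hT
  have hc : Continuous γ.extend := γ.continuous_extend
  have hmem : ∀ s, γ.extend s ∈ T := fun s => hγ (projIcc 0 1 zero_le_one s)
  obtain ⟨s, hs, t, ht, -, hst, -, hdis₁, hdis₂⟩ := exists_Icc_disjoint_Ioc_disjoint_Ico
    (hG₁.preimage hc) (hG₂.preimage hc) (by simpa using hx) (by simpa using hy) zero_le_one
  obtain ⟨r, hr, hrm⟩ := intermediate_value_Icc hst (hh.comp hc).continuousOn
    ⟨(h₁ _ hs).le, (h₂ _ ht).le⟩
  have hsr : s < r := hr.1.lt_of_ne fun hsr => (h₁ _ hs).ne (hsr ▸ hrm)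
  have hrt : r < t := hr.2.lt_of_ne fun hrt => (h₂ _ ht).ne' (hrt ▸ hrm)
  have hjoined : ∀ {a b : ℝ} {S : Set X}, a ≤ b → (∀ c ∈ Icc a b, γ.extend c ∉ S) →
      JoinedIn (T \ S) (γ.extend a) (γ.extend b) := fun hab hS =>
    (((convex_Icc _ _).isPathConnected (nonempty_Icc.2 hab)).image hc).joinedIn _
      (mem_image_of_mem _ (left_mem_Icc.2 hab)) _ (mem_image_of_mem _ (right_mem_Icc.2 hab))
      |>.mono (image_subset_iff.2 fun c hcab => ⟨hmem c, hS c hcab⟩)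
  refine ⟨γ.extend r, hmem r, hrm, ⟨γ.extend s, hs, hjoined hr.1 fun c hc => ?_⟩,
    γ.extend t, ht, (hjoined hr.2 fun c hc => ?_).symm⟩
  · exact disjoint_left.1 hdis₂ ⟨hc.1, hc.2.trans_lt hrt⟩
  · exact disjoint_left.1 hdis₁ ⟨hsr.trans_le hc.1, hc.2⟩

theorem not_forall_level_joinedIn {G₁ G₂ Y : Set ℂ} {T N : Fin 3 → Set ℂ} {h : ℂ → ℝ} {m : ℝ}
    (hG₁ : IsClosed G₁) (hG₂ : IsClosed G₂) (hG₁c : IsPathConnected G₁)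
    (hG₂c : IsPathConnected G₂) (hY : IsPathConnected Y) (hh : Continuous h)
    (h₁ : ∀ w ∈ G₁, h w < m) (h₂ : ∀ w ∈ G₂, m < h w) (hYG₁ : Disjoint Y G₁)
    (hYG₂ : Disjoint Y G₂) (hNd : Pairwise (Function.onFun Disjoint N))
    (hT : ∀ j, IsPathConnected (T j)) (hTN : ∀ j, T j ⊆ N j) (hTY : ∀ j, Disjoint (T j) Y)
    (hTG₁ : ∀ j, (T j ∩ G₁).Nonempty) (hTG₂ : ∀ j, (T j ∩ G₂).Nonempty) :
    ¬ ∀ j, ∀ p ∈ T j, h p = m → ∃ q ∈ Y, JoinedIn (N j \ (G₁ ∪ G₂)) q p := by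
  intro hq
  have hcross : ∀ j, ∃ p ∈ T j, h p = m ∧ (∃ x ∈ G₁, JoinedIn (T j \ G₂) x p) ∧
      ∃ y ∈ G₂, JoinedIn (T j \ G₁) y p := fun j =>
    have ⟨_, hxT, hx⟩ := hTG₁ j
    have ⟨_, hyT, hy⟩ := hTG₂ j
    exists_mem_level_joinedIn_diff hG₁ hG₂ hh h₁ h₂ ((hT j).joinedIn _ hxT _ hyT) hx hy
  choose p hpT hpm hx hy using hcross
  have hG : Disjoint G₁ G₂ := disjoint_left.2 fun w hw₁ hw₂ => (h₁ w hw₁).not_gt (h₂ w hw₂)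
  have hTsub : ∀ {G : Set ℂ} (j), T j \ G ⊆ N j \ (G ∪ Y) := fun j w hw =>
    ⟨hTN j hw.1, not_or.2 ⟨hw.2, disjoint_left.1 (hTY j) hw.1⟩⟩
  refine not_forall_joinedIn_of_pairwise_disjoint (H := ![G₁, G₂, Y]) (v := p)
    ?_ ?_ hNd fun i j => ?_
  · simp [Fin.forall_fin_succ, hG₁c, hG₂c, hY]
  · simp [Pairwise, Function.onFun, Fin.forall_fin_succ, hG, hG.symm, hYG₁, hYG₁.symm,
      hYG₂, hYG₂.symm]
  · have hiUnion : ⋃ k ≠ i, ![G₁, G₂, Y] k = ![G₂ ∪ Y, G₁ ∪ Y, G₁ ∪ G₂] i := by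
      ext w
      fin_cases i <;> simp [Fin.exists_fin_succ]
    rw [hiUnion]
    fin_cases i
    · exact (hx j).imp fun x => And.imp_right (·.mono (hTsub j))
    · exact (hy j).imp fun y => And.imp_right (·.mono (hTsub j))
    · exact hq j (p j) (hpT j) (hpm j)

end Hubs

section Strands

theorem exists_pairwise_disjoint_thickening {ι X : Type*} [Finite ι] [PseudoEMetricSpace X]
    {C : ι → Set X} (hC : ∀ i, IsCompact (C i)) (hCc : ∀ i, IsClosed (C i))
    (hCd : Pairwise (Function.onFun Disjoint C)) :
    ∃ δ > 0, Pairwise (Function.onFun Disjoint fun i => thickening δ (C i)) := by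
  have hev : ∀ᶠ δ : ℝ in 𝓝[>] 0, ∀ i j, i ≠ j →
      Disjoint (thickening δ (C i)) (thickening δ (C j)) := by
    simp only [eventually_all]
    intro i j hij
    obtain ⟨δ, hδ, hd⟩ := (hCd hij).exists_thickenings (hC i) (hCc j)
    filter_upwards [Ioo_mem_nhdsGT hδ] with x hx
    exact hd.mono (thickening_mono hx.2.le _) (thickening_mono hx.2.le _)
  obtain ⟨δ, hδ, hδ0⟩ := (hev.and self_mem_nhdsWithin).exists
  exact ⟨δ, hδ0, fun i j => hδ i j⟩

theorem isPathConnected_thickening {E : Type*} [NormedAddCommGroup E] [NormedSpace ℝ E]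
    {S : Set E} (hS : IsConnected S) {ε : ℝ} (hε : 0 < ε) : IsPathConnected (thickening ε S) := by
  rw [← isOpen_thickening.isConnected_iff_isPathConnected, ← add_ball_zero, ← add_image_prod]
  exact (hS.prod (isPathConnected_ball hε).isConnected).image _ continuous_add.continuousOn

theorem exists_isCompact_isPathConnected_between {X : Type*} [TopologicalSpace X] {S t : Set X}
    (hS : IsPathConnected S) (ht : t.Finite) (htS : t ⊆ S) :
    ∃ Y, t ⊆ Y ∧ Y ⊆ S ∧ IsCompact Y ∧ IsPathConnected Y := by
  obtain ⟨x, hx⟩ := hS.nonempty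
  obtain ⟨n, f, -, rfl⟩ := ht.fin_param
  obtain ⟨γ, hγS, hγ⟩ := hS.exists_path_through_family (Fin.cons x f)
    (Fin.cases hx fun i => htS (mem_range_self i))
  exact ⟨range γ, range_subset_iff.2 fun i => hγ i.succ, hγS, isCompact_range γ.continuous,
    γ.extend_range ▸ isPathConnected_range γ.continuous_extend⟩

theorem exists_isCompact_isPathConnected_subset_thickening {X : Type*} [PseudoMetricSpace X]
    {D F : Set X} (hD : IsPathConnected D) (hF : IsCompact F) (hFD : F ⊆ closure D) {η : ℝ}
    (hη : 0 < η) : ∃ Y ⊆ D, IsCompact Y ∧ IsPathConnected Y ∧ F ⊆ thickening η Y := by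
  have hcover : F ⊆ ⋃ q ∈ D, ball q η :=
    thickening_eq_biUnion_ball (E := D) ▸ hFD.trans (closure_subset_thickening hη D)
  obtain ⟨t, htD, ht, hFt⟩ := hF.elim_finite_subcover_image (fun _ _ => isOpen_ball) hcover
  obtain ⟨Y, htY, hYD, hY, hYc⟩ := exists_isCompact_isPathConnected_between hD ht htD
  exact ⟨Y, hYD, hY, hYc, (hFt.trans thickening_eq_biUnion_ball.ge).trans
    (thickening_subset_of_subset η htY)⟩

theorem sub_lt_infDist_of_mem_thickening {X : Type*} [PseudoMetricSpace X] {R S : Set X}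
    (hR : R.Nonempty) {d ε : ℝ} (hRS : ∀ x ∈ R, ∀ y ∈ S, d ≤ dist y x) {w : X}
    (hw : w ∈ thickening ε S) : d - ε < infDist w R := by
  obtain ⟨y, hy, hwy⟩ := mem_thickening_iff.1 hw
  have hdy : d ≤ infDist y R := (le_infDist hR).2 fun x hx => hRS x hx y hy
  linarith [infDist_le_infDist_add_dist (s := R) (x := y) (y := w), dist_comm y w]

theorem exists_isCompact_isPathConnected_inter_nonempty {ι E : Type*} [Finite ι]
    [NormedAddCommGroup E] [NormedSpace ℝ E] {R : Set E} {C : ι → Set E} (hR : IsConnected R)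
    (hC : ∀ i, (C i ∩ R).Nonempty) {ε : ℝ} (hε : 0 < ε) :
    ∃ G ⊆ thickening ε R, IsCompact G ∧ IsPathConnected G ∧ ∀ i, (C i ∩ G).Nonempty := by
  choose a haC haR using hC
  obtain ⟨G, haG, hGR, hG, hGc⟩ := exists_isCompact_isPathConnected_between
    (isPathConnected_thickening hR hε) (finite_range a)
    (range_subset_iff.2 fun i => self_subset_thickening hε _ (haR i))
  exact ⟨G, hGR, hG, hGc, fun i => ⟨a i, haC i, haG (mem_range_self i)⟩⟩

theorem exists_joinedIn_thickening_sdiff {E : Type*} [NormedAddCommGroup E] [NormedSpace ℝ E]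
    {C Y G : Set E} {η : ℝ} {p : E} (hp : p ∈ thickening η C) (hC : C ⊆ thickening η Y)
    (hG : Disjoint (ball p (2 * η)) G) : ∃ q ∈ Y, JoinedIn (thickening (3 * η) C \ G) q p := by
  obtain ⟨q, hq, hpq⟩ := mem_thickening_iff.1 <| two_mul η ▸
    thickening_thickening_subset η η Y (thickening_subset_of_subset η hC hp)
  have hball : ball p (2 * η) ⊆ thickening (3 * η) C := fun w hw =>
    thickening_mono (by linarith) C <|
      thickening_thickening_subset (2 * η) η C (ball_subset_thickening hp _ hw)
  have hη : 0 < 2 * η := pos_of_mem_ball hpq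
  exact ⟨q, hq, ((isPathConnected_ball hη).joinedIn _ (mem_ball'.2 hpq) _ (mem_ball_self hη)).mono
    (subset_sdiff.2 ⟨hball, hG⟩)⟩

theorem not_forall_inter_nonempty_of_pairwise_disjoint {K D R₁ R₂ : Set ℂ} {C : Fin 3 → Set ℂ}
    {d : ℝ} (hK : IsClosed K) (hD : IsPathConnected D) (hDK : Disjoint D K)
    (hR₁ : IsConnected R₁) (hR₁K : R₁ ⊆ K) (hR₂ : IsConnected R₂) (hR₂K : R₂ ⊆ K) (hd : 0 < d)
    (hR : ∀ x ∈ R₁, ∀ y ∈ R₂, d ≤ dist y x) (hC : ∀ i, IsCompact (C i))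
    (hCc : ∀ i, IsConnected (C i)) (hCK : ∀ i, C i ⊆ K) (hCD : ∀ i, C i ⊆ closure D)
    (hCd : Pairwise (Function.onFun Disjoint C)) :
    ¬ ∀ i, (C i ∩ R₁).Nonempty ∧ (C i ∩ R₂).Nonempty := by
  intro hmeet
  obtain ⟨δ, hδ, hδC⟩ := exists_pairwise_disjoint_thickening hC (fun i => (hC i).isClosed) hCd
  obtain ⟨η, hη, hηδ, hηd⟩ : ∃ η > 0, 3 * η ≤ δ ∧ 6 * η ≤ d :=
    ⟨min δ d / 6, by positivity, by linarith [min_le_left δ d], by linarith [min_le_right δ d]⟩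
  have hηC : Pairwise (Function.onFun Disjoint fun i => thickening (3 * η) (C i)) := fun i j hij =>
    (hδC hij).mono (thickening_mono hηδ _) (thickening_mono hηδ _)
  obtain ⟨Y, hYD, hY, hYc, hCY⟩ := exists_isCompact_isPathConnected_subset_thickening hD
    (isCompact_iUnion hC) (iUnion_subset hCD) hη
  obtain ⟨ε₀, hε₀, hYK⟩ := (hDK.mono_left hYD).exists_thickenings hY hK
  obtain ⟨ε, hε, hεη, hεε₀⟩ : ∃ ε > 0, ε ≤ η ∧ ε ≤ ε₀ :=
    ⟨min η ε₀, lt_min hη hε₀, min_le_left _ _, min_le_right _ _⟩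
  have hYε : ∀ S ⊆ K, Disjoint Y (thickening ε S) := fun S hS =>
    hYK.mono (self_subset_thickening hε₀ Y)
      ((thickening_mono hεε₀ S).trans (thickening_subset_of_subset _ hS))
  obtain ⟨G₁, hG₁R, hG₁, hG₁c, hCG₁⟩ :=
    exists_isCompact_isPathConnected_inter_nonempty hR₁ (hmeet · |>.1) hε
  obtain ⟨G₂, hG₂R, hG₂, hG₂c, hCG₂⟩ :=
    exists_isCompact_isPathConnected_inter_nonempty hR₂ (hmeet · |>.2) hε
  have hlt : ∀ w ∈ G₁, infDist w R₁ < η := fun w hw =>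
    ((mem_thickening_iff_infDist_lt hR₁.nonempty).1 (hG₁R hw)).trans_le hεη
  have hgt : ∀ w ∈ G₂, d - η < infDist w R₁ := fun w hw => by
    linarith [sub_lt_infDist_of_mem_thickening hR₁.nonempty hR (hG₂R hw)]
  refine not_forall_level_joinedIn (m := d / 2) hG₁.isClosed hG₂.isClosed hG₁c hG₂c hYc
    (continuous_infDist_pt R₁) (fun w hw => by linarith [hlt w hw])
    (fun w hw => by linarith [hgt w hw]) ((hYε _ hR₁K).mono_right hG₁R)
    ((hYε _ hR₂K).mono_right hG₂R) hηC (fun j => isPathConnected_thickening (hCc j) hε)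
    (fun j => thickening_mono (by linarith : ε ≤ 3 * η) _) (fun j => (hYε _ (hCK j)).symm)
    (fun j => (hCG₁ j).mono (inter_subset_inter_left _ (self_subset_thickening hε _)))
    (fun j => (hCG₂ j).mono (inter_subset_inter_left _ (self_subset_thickening hε _)))
    fun j p hp hpd => exists_joinedIn_thickening_sdiff (thickening_mono hεη _ hp)
      ((subset_iUnion C j).trans hCY) ?_
  refine disjoint_left.2 fun w hwp => ?_
  rintro (hwG | hwG)
  · linarith [hlt w hwG, mem_ball'.1 hwp, infDist_le_infDist_add_dist (s := R₁) (x := p) (y := w)]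
  · linarith [hgt w hwG, mem_ball.1 hwp, infDist_le_infDist_add_dist (s := R₁) (x := w) (y := p)]

end Strands

section LocallyConnected

variable {X : Type*} [TopologicalSpace X]

theorem locallyConnectedSpace_coe_iff {S : Set X} :
    LocallyConnectedSpace S ↔
      ∀ z ∈ S, ∀ U ∈ 𝓝 z, ∃ C ∈ 𝓝[S] z, C ⊆ S ∩ U ∧ IsPreconnected C := by
  rw [locallyConnectedSpace_iff_connected_subsets, Subtype.forall]
  refine forall₂_congr fun z hz => ⟨fun h U hU => ?_, fun h U hU => ?_⟩
  · obtain ⟨V, hV, hVc, hVU⟩ :=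
      h _ (preimage_coe_mem_nhds_subtype.2 (mem_nhdsWithin_of_mem_nhds hU))
    exact ⟨_, mem_nhds_subtype_iff_nhdsWithin.1 hV,
      (image_mono hVU).trans (Subtype.image_preimage_coe S U).subset,
      hVc.image _ continuous_subtype_val.continuousOn⟩
  · obtain ⟨W, hW, hWU⟩ := (mem_nhds_subtype S _ U).1 hU
    obtain ⟨C, hC, hCW, hCc⟩ := h W hW
    have himage : Subtype.val '' ((↑) ⁻¹' C : Set S) = C := by
      rw [Subtype.image_preimage_coe, inter_eq_right.2 (hCW.trans inter_subset_left)]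
    refine ⟨(↑) ⁻¹' C, preimage_coe_mem_nhds_subtype.2 hC, ?_,
      (preimage_mono (hCW.trans inter_subset_right)).trans hWU⟩
    rwa [← IsInducing.subtypeVal.isPreconnected_image, himage]

theorem locallyConnectedSpace_coe_iff_isConnected_inter {S : Set X} :
    LocallyConnectedSpace S ↔
      ∀ z ∈ S, ∀ U ∈ 𝓝 z, ∃ V ∈ 𝓝 z, V ⊆ U ∧ IsConnected (V ∩ S) := by
  rw [locallyConnectedSpace_coe_iff]
  refine forall₂_congr fun z hz => forall₂_congr fun U hU =>
    ⟨fun ⟨C, hC, hCU, hCc⟩ => ?_, fun ⟨V, hV, hVU, hVc⟩ => ?_⟩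
  · have hinter : (C ∪ U \ S) ∩ S = C := by
      rw [union_inter_distrib_right, sdiff_inter_self, union_empty,
        inter_eq_left.2 (hCU.trans inter_subset_left)]
    refine ⟨C ∪ U \ S, ?_, union_subset (hCU.trans inter_subset_right) sdiff_subset,
      hinter.symm ▸ ⟨⟨z, mem_of_mem_nhdsWithin hz hC⟩, hCc⟩⟩
    filter_upwards [hU, mem_nhdsWithin_iff_eventually.1 hC] with w hwU hwC
    exact (em (w ∈ S)).imp hwC fun hwS => ⟨hwU, hwS⟩
  · exact ⟨S ∩ V, inter_mem_nhdsWithin S hV, inter_subset_inter_right S hVU,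
      inter_comm V S ▸ hVc.isPreconnected⟩

end LocallyConnected

section Components

variable {X : Type*} [TopologicalSpace X]

theorem isClosed_connectedComponentIn {F : Set X} (hF : IsClosed F) (x : X) :
    IsClosed (connectedComponentIn F x) := by
  by_cases hx : x ∈ F
  · exact isClosed_of_closure_subset <|
      isPreconnected_connectedComponentIn.closure.subset_connectedComponentIn
        (subset_closure (mem_connectedComponentIn hx))
        (closure_minimal (connectedComponentIn_subset F x) hF)
  · simp [connectedComponentIn_eq_empty hx]

theorem disjoint_connectedComponentIn_of_ne {F : Set X} {x y : X}
    (h : connectedComponentIn F x ≠ connectedComponentIn F y) :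
    Disjoint (connectedComponentIn F x) (connectedComponentIn F y) :=
  disjoint_left.2 fun _ hx hy =>
    h ((connectedComponentIn_eq hx).trans (connectedComponentIn_eq hy).symm)

theorem infinite_image_connectedComponentIn {F S : Set X} {z : X} (hF : IsClosed F)
    (hS : S ⊆ F \ connectedComponentIn F z) (hz : z ∈ closure S) :
    (connectedComponentIn F '' S).Infinite := by
  intro hfin
  have hclosed : IsClosed (⋃ C ∈ connectedComponentIn F '' S, C) :=
    hfin.isClosed_biUnion (forall_mem_image.2 fun y _ => isClosed_connectedComponentIn hF y)
  have hcover : S ⊆ ⋃ C ∈ connectedComponentIn F '' S, C := fun y hy =>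
    mem_biUnion (mem_image_of_mem _ hy) (mem_connectedComponentIn (hS hy).1)
  obtain ⟨_, ⟨y, hy, rfl⟩, hzy⟩ := mem_iUnion₂.1 (closure_minimal hcover hclosed hz)
  exact (hS hy).2 (connectedComponentIn_eq hzy ▸ mem_connectedComponentIn (hS hy).1)

theorem exists_isClosed_partition_of_connectedComponentIn_subset [T2Space X] {F U : Set X}
    (hF : IsCompact F) (hU : IsOpen U) {x : X} (hx : x ∈ F) (h : connectedComponentIn F x ⊆ U) :
    ∃ A B, IsClosed A ∧ IsClosed B ∧ Disjoint A B ∧ A ∪ B = F ∧ x ∈ A ∧ A ⊆ U := by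
  have : CompactSpace F := isCompact_iff_compactSpace.1 hF
  rw [connectedComponentIn_eq_image hx, image_subset_iff,
    connectedComponent_eq_iInter_isClopen] at h
  have : Nonempty {Q : Set F // IsClopen Q ∧ ⟨x, hx⟩ ∈ Q} := ⟨⟨univ, isClopen_univ, mem_univ _⟩⟩
  obtain ⟨⟨Q, hQ, hxQ⟩, hQU⟩ := exists_subset_nhds_of_compactSpace
    (V := fun Q : {Q : Set F // IsClopen Q ∧ ⟨x, hx⟩ ∈ Q} => (Q : Set F))
    (fun Q R => ⟨⟨Q ∩ R, Q.2.1.inter R.2.1, Q.2.2, R.2.2⟩, inter_subset_left, inter_subset_right⟩)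
    (fun Q => Q.2.1.isClosed)
    fun y hy => (hU.preimage continuous_subtype_val).mem_nhds (h hy)
  have hclosed : ∀ R : Set F, IsClosed R → IsClosed ((↑) '' R : Set X) := fun R hR =>
    (hR.isCompact.image continuous_subtype_val).isClosed
  refine ⟨(↑) '' Q, (↑) '' Qᶜ, hclosed _ hQ.isClosed, hclosed _ hQ.compl.isClosed,
    (disjoint_image_iff Subtype.val_injective).2 disjoint_compl_right, ?_,
    mem_image_of_mem _ hxQ, image_subset_iff.2 hQU⟩
  rw [← image_union, union_compl_self, image_univ, Subtype.range_coe]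

theorem nonempty_connectedComponentIn_sdiff [T2Space X] {L U B : Set X} {x : X}
    (hL : IsPreconnected L) (hU : IsOpen U) (hUB : U ⊆ B) (hLB : IsCompact (L ∩ B))
    (hx : x ∈ L ∩ B) (hLU : ¬ L ⊆ U) : (connectedComponentIn (L ∩ B) x \ U).Nonempty := by
  by_contra hempty
  obtain ⟨P, Q, hP, hQ, hPQ, hunion, hxP, hPU⟩ :=
    exists_isClosed_partition_of_connectedComponentIn_subset hLB hU hx
      (sdiff_eq_empty.1 (not_nonempty_iff_eq_empty.1 hempty))
  obtain ⟨v, hvL, hvU⟩ := not_subset.1 hLU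
  have hcover : L ⊆ P ∪ (Uᶜ ∪ Q) := fun w hw => by
    by_cases hwU : w ∈ U
    · exact (hunion.ge ⟨hw, hUB hwU⟩).imp_right Or.inr
    · exact Or.inr (Or.inl hwU)
  obtain ⟨w, -, hwP, hwU | hwQ⟩ := isPreconnected_closed_iff.1 hL P (Uᶜ ∪ Q) hP
    (hU.isClosed_compl.union hQ) hcover ⟨x, hx.1, hxP⟩ ⟨v, hvL, Or.inl hvU⟩
  · exact hwU (hPU hwP)
  · exact disjoint_left.1 hPQ hwP hwQ

theorem neBot_nhdsWithin_sdiff {L B C : Set X} {z : X} (hB : B ∈ 𝓝 z) (hC : C ∉ 𝓝[L] z) :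
    (𝓝[(L ∩ B) \ C] z).NeBot := by
  refine ⟨fun hbot => hC ?_⟩
  filter_upwards [inter_mem_nhdsWithin L hB, mem_nhdsWithin_of_mem_nhds
    (mem_nhdsWithin_iff_eventually.1 (empty_mem_iff_bot.2 hbot))] with y hyB hy
  exact not_not.1 fun hyC => hy ⟨hyB, hyC⟩

theorem exists_infinite_pairwiseDisjoint_continua [T2Space X] {L B : Set X} {z : X}
    (hL : IsPreconnected L) (hLc : IsClosed L) (hB : IsCompact B) (hBz : B ∈ 𝓝 z) (hz : z ∈ L)
    (hC : connectedComponentIn (L ∩ B) z ∉ 𝓝[L] z) :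
    ∃ b ∈ L \ interior B, ∀ V₁ ∈ 𝓝 z, ∀ V₂ ∈ 𝓝 b, ∃ 𝒞 : Set (Set X), 𝒞.Infinite ∧
      𝒞.PairwiseDisjoint id ∧ ∀ C ∈ 𝒞, IsCompact C ∧ IsConnected C ∧ C ⊆ L ∧
        (C ∩ V₁).Nonempty ∧ (C ∩ V₂).Nonempty := by
  let F := L ∩ B
  have hF : IsCompact F := hB.inter_left hLc
  have hLB : ¬ L ⊆ interior B := fun h => hC <| by
    rw [inter_eq_left.2 (h.trans interior_subset), hL.connectedComponentIn hz]
    exact self_mem_nhdsWithin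
  have hbump : ∀ y ∈ F, ∃ w ∈ connectedComponentIn F y, w ∉ interior B := fun y hy =>
    nonempty_connectedComponentIn_sdiff hL isOpen_interior interior_subset hF hy hLB
  choose! f hfC hfB using hbump
  have hfF : ∀ y ∈ F, f y ∈ F \ interior B := fun y hy =>
    ⟨connectedComponentIn_subset _ _ (hfC y hy), hfB y hy⟩
  have hne : (𝓝[F \ connectedComponentIn F z] z).NeBot := neBot_nhdsWithin_sdiff hBz hC
  obtain ⟨b, hbF, hb⟩ := (hF.diff isOpen_interior).exists_mapClusterPt
    (f := 𝓝[F \ connectedComponentIn F z] z) (u := f)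
    (tendsto_principal.2 (by filter_upwards [self_mem_nhdsWithin] with y hy using hfF y hy.1))
  refine ⟨b, ⟨hbF.1.1, hbF.2⟩, fun V₁ hV₁ V₂ hV₂ => ?_⟩
  let S := {y ∈ F \ connectedComponentIn F z | y ∈ V₁ ∧ f y ∈ V₂}
  have hV₁S : ∀ᶠ y in 𝓝[F \ connectedComponentIn F z] z,
      y ∈ F \ connectedComponentIn F z ∧ y ∈ V₁ :=
    inter_mem self_mem_nhdsWithin (mem_nhdsWithin_of_mem_nhds hV₁)
  have hfreq : ∃ᶠ y in 𝓝[F \ connectedComponentIn F z] z, y ∈ S :=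
    ((mapClusterPt_iff_frequently.1 hb V₂ hV₂).and_eventually hV₁S).mono
      fun y hy => ⟨hy.2.1, hy.2.2, hy.1⟩
  have hzS : z ∈ closure S :=
    mem_closure_iff_frequently.2 (hfreq.filter_mono nhdsWithin_le_nhds)
  refine ⟨connectedComponentIn F '' S, infinite_image_connectedComponentIn hF.isClosed
    (fun y hy => hy.1) hzS, ?_, ?_⟩
  · rintro _ ⟨x, -, rfl⟩ _ ⟨y, -, rfl⟩ hxy
    exact disjoint_connectedComponentIn_of_ne hxy
  · rintro _ ⟨y, hy, rfl⟩
    have hyC := mem_connectedComponentIn hy.1.1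
    exact ⟨hF.of_isClosed_subset (isClosed_connectedComponentIn hF.isClosed y)
      (connectedComponentIn_subset _ _), isConnected_connectedComponentIn_iff.2 hy.1.1,
      (connectedComponentIn_subset _ _).trans inter_subset_left, ⟨y, hyC, hy.2.1⟩,
      ⟨f y, hfC y hy.1.1, hy.2.2⟩⟩

end Components

section Torhorst

theorem locallyConnectedSpace_of_subset_closure {K D L : Set ℂ} (hK : IsClosed K)
    [LocallyConnectedSpace K] (hD : IsPathConnected D) (hDK : Disjoint D K) (hL : IsPreconnected L)
    (hLc : IsClosed L) (hLK : L ⊆ K) (hLD : L ⊆ closure D) : LocallyConnectedSpace L := by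
  refine locallyConnectedSpace_coe_iff.2 fun z hz U hU => ?_
  obtain ⟨r, hr, hrU⟩ := nhds_basis_closedBall.mem_iff.1 hU
  refine ⟨connectedComponentIn (L ∩ closedBall z r) z, ?_,
    (connectedComponentIn_subset _ _).trans (inter_subset_inter_right L hrU),
    isPreconnected_connectedComponentIn⟩
  by_contra hC
  obtain ⟨b, ⟨hbL, hbr⟩, hstrands⟩ := exists_infinite_pairwiseDisjoint_continua hL hLc
    (isCompact_closedBall z r) (closedBall_mem_nhds z hr) hz hC
  have hrb : r ≤ dist b z := not_lt.1 fun hlt => hbr (ball_subset_interior_closedBall hlt)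
  have hlc := locallyConnectedSpace_coe_iff_isConnected_inter.1 ‹LocallyConnectedSpace K›
  obtain ⟨V₁, hV₁, hV₁z, hV₁c⟩ := hlc z (hLK hz) _ (ball_mem_nhds z (by positivity : 0 < r / 3))
  obtain ⟨V₂, hV₂, hV₂b, hV₂c⟩ := hlc b (hLK hbL) _ (ball_mem_nhds b (by positivity : 0 < r / 3))
  obtain ⟨𝒞, h𝒞, hdisj, hcont⟩ := hstrands V₁ hV₁ V₂ hV₂
  let C : Fin 3 → Set ℂ := fun i => h𝒞.natEmbedding 𝒞 i
  have hmem : ∀ i, C i ∈ 𝒞 := fun i => (h𝒞.natEmbedding 𝒞 i).2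
  have hCinj : Function.Injective C := Subtype.val_injective.comp
    ((h𝒞.natEmbedding 𝒞).injective.comp Fin.val_injective)
  choose hCcomp hCconn hCL hCV₁ hCV₂ using fun i => hcont (C i) (hmem i)
  have hCK : ∀ i, C i ⊆ K := fun i => (hCL i).trans hLK
  have hmeet : ∀ {i V}, (C i ∩ V).Nonempty → (C i ∩ (V ∩ K)).Nonempty := fun {i V} h =>
    h.mono fun w hw => ⟨hw.1, hw.2, hCK i hw.1⟩
  refine not_forall_inter_nonempty_of_pairwise_disjoint (d := r / 3) hK hD hDK hV₁c
    inter_subset_right hV₂c inter_subset_right (by positivity) (fun x hx y hy => ?_) hCcomp hCconn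
    hCK (fun i => (hCL i).trans hLD) (fun i j hij => hdisj (hmem i) (hmem j) (hCinj.ne hij))
    fun i => ⟨hmeet (hCV₁ i), hmeet (hCV₂ i)⟩
  linarith [mem_ball.1 (hV₁z hx.1), mem_ball'.1 (hV₂b hy.1), dist_triangle4 b y x z]

end Torhorst

section Unicoherence

variable {X : Type*} [TopologicalSpace X] [SimplyConnectedSpace X] [LocallyPathConnectedSpace X]

theorem eq_of_exp_eq_one_of_union_eq_univ {A B : Set X} (hA : IsPreconnected A)
    (hB : IsPreconnected B) (hAc : IsClosed A) (hBc : IsClosed B) (hAB : A ∪ B = univ) {u : X → ℂ}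
    (hu : Continuous u) (h : ∀ w ∈ A ∩ B, Complex.exp (u w) = 1) {x y : X} (hx : x ∈ A ∩ B)
    (hy : y ∈ A ∩ B) : u x = u y := by
  classical
  have hfr : frontier A ⊆ A ∩ B := fun w hw => ⟨hAc.frontier_subset hw,
    closure_minimal (compl_subset_iff_union.2 hAB) hBc (frontier_compl A ▸ hw).1⟩
  let f := A.piecewise (fun w => Complex.exp (u w)) 1
  have hfA : ∀ w ∈ A, f w = Complex.exp (u w) := fun w => piecewise_eq_of_mem A _ _
  have hfB : ∀ w ∈ B, f w = 1 := fun w hw => by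
    by_cases hwA : w ∈ A
    · rw [hfA w hwA, h w ⟨hwA, hw⟩]
    · exact piecewise_eq_of_notMem A _ _ hwA
  obtain ⟨l, hl, hlf⟩ := exists_continuous_exp_eq (f := f)
    (Continuous.piecewise (fun w hw => h w (hfr hw)) (by fun_prop) continuous_one) fun w => by
      by_cases hwA : w ∈ A
      · exact hfA w hwA ▸ Complex.exp_ne_zero _
      · exact hfB w ((eq_univ_iff_forall.1 hAB w).resolve_left hwA) ▸ one_ne_zero
  have hlA := sub_eq_sub_of_exp_eqOn hA hl.continuousOn hu.continuousOn
    (fun w hw => (hlf w).trans (hfA w hw)) hx.1 hy.1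
  have hlB := sub_eq_sub_of_exp_eqOn (g := 0) hB hl.continuousOn continuousOn_const
    (fun w hw => by rw [hlf, hfB w hw, Pi.zero_apply, Complex.exp_zero]) hx.2 hy.2
  simp only [Pi.zero_apply, sub_zero] at hlB
  exact sub_eq_zero.1 (hlA.symm.trans hlB)

theorem isPreconnected_inter_of_union_eq_univ [NormalSpace X] {A B : Set X}
    (hA : IsPreconnected A) (hB : IsPreconnected B) (hAc : IsClosed A) (hBc : IsClosed B)
    (hAB : A ∪ B = univ) : IsPreconnected (A ∩ B) := by
  rw [isPreconnected_closed_iff]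
  rintro P Q hP hQ hPQ ⟨x, hx, hxP⟩ ⟨y, hy, hyQ⟩
  by_contra hempty
  have hdisj : Disjoint (A ∩ B ∩ P) (A ∩ B ∩ Q) := disjoint_left.2 fun w hwP hwQ =>
    hempty ⟨w, hwP.1, hwP.2, hwQ.2⟩
  obtain ⟨g, hg0, hg1, -⟩ := exists_continuous_zero_one_of_isClosed
    ((hAc.inter hBc).inter hP) ((hAc.inter hBc).inter hQ) hdisj
  have heq := eq_of_exp_eq_one_of_union_eq_univ hA hB hAc hBc hAB
    (u := fun w => 2 * Real.pi * Complex.I * (g w : ℂ)) (by fun_prop) (fun w hw => by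
      rcases hPQ hw with hwP | hwQ
      · simp [hg0 ⟨hw, hwP⟩]
      · simp [hg1 ⟨hw, hwQ⟩, Complex.exp_two_pi_mul_I]) hx hy
  simp [hg0 ⟨hx, hxP⟩, hg1 ⟨hy, hyQ⟩, Real.pi_ne_zero] at heq

end Unicoherence

section Frontier

variable {X : Type*} [TopologicalSpace X]

theorem disjoint_frontier_connectedComponentIn [LocallyConnectedSpace X] {O : Set X}
    (hO : IsOpen O) (x : X) : Disjoint (frontier (connectedComponentIn O x)) O := by
  refine disjoint_left.2 fun w hw hwO => ?_
  obtain ⟨v, hvw, hvx⟩ := mem_closure_iff.1 hw.1 _ hO.connectedComponentIn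
    (mem_connectedComponentIn hwO)
  have heq := (connectedComponentIn_eq hvx).trans (connectedComponentIn_eq hvw).symm
  rw [heq, hO.connectedComponentIn.frontier_eq] at hw
  exact hw.2 (mem_connectedComponentIn hwO)

theorem isPreconnected_compl_connectedComponentIn [LocallyConnectedSpace X] [PreconnectedSpace X]
    {O : Set X} (hO : IsOpen O) (hOc : IsConnected Oᶜ) (x : X) :
    IsPreconnected (connectedComponentIn O x)ᶜ := by
  obtain ⟨d, hd⟩ := hOc.nonempty
  have hOx : Oᶜ ⊆ (connectedComponentIn O x)ᶜ :=
    compl_subset_compl.2 (connectedComponentIn_subset O x)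
  refine isPreconnected_of_forall d fun w hw => ?_
  by_cases hwO : w ∈ O
  · have hdisj := disjoint_connectedComponentIn_of_ne fun heq : connectedComponentIn O w =
      connectedComponentIn O x => hw (heq ▸ mem_connectedComponentIn hwO)
    obtain ⟨v, hv⟩ := nonempty_frontier_iff.2 ⟨⟨w, mem_connectedComponentIn hwO⟩,
      ne_univ_iff_exists_notMem _ |>.2 ⟨d, fun hdw => hd (connectedComponentIn_subset O w hdw)⟩⟩
    have hvO : v ∈ Oᶜ := disjoint_left.1 (disjoint_frontier_connectedComponentIn hO w) hv
    exact ⟨Oᶜ ∪ closure (connectedComponentIn O w),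
      union_subset hOx (closure_minimal hdisj.subset_compl_right
        hO.connectedComponentIn.isClosed_compl), Or.inl hd,
      Or.inr (subset_closure (mem_connectedComponentIn hwO)),
      hOc.isPreconnected.union v hvO hv.1 isPreconnected_connectedComponentIn.closure⟩
  · exact ⟨Oᶜ, hOx, hd, hwO, hOc.isPreconnected⟩

theorem isPreconnected_frontier_connectedComponentIn [SimplyConnectedSpace X]
    [LocallyPathConnectedSpace X] [NormalSpace X] {O : Set X} (hO : IsOpen O)
    (hOc : IsConnected Oᶜ) (x : X) : IsPreconnected (frontier (connectedComponentIn O x)) := by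
  have hCO : IsOpen (connectedComponentIn O x) := hO.connectedComponentIn
  rw [frontier_eq_closure_inter_closure, hCO.isClosed_compl.closure_eq]
  exact isPreconnected_inter_of_union_eq_univ isPreconnected_connectedComponentIn.closure
    (isPreconnected_compl_connectedComponentIn hO hOc x) isClosed_closure hCO.isClosed_compl
    (eq_univ_of_subset (union_subset_union_left _ subset_closure) (union_compl_self _))

theorem frontier_connectedComponentIn_interior_subset [LocallyConnectedSpace X] {K : Set X}
    (x : X) : frontier (connectedComponentIn (interior K) x) ⊆ frontier K := fun _ hw =>
  ⟨closure_mono ((connectedComponentIn_subset _ x).trans interior_subset) hw.1,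
    disjoint_left.1 (disjoint_frontier_connectedComponentIn isOpen_interior x) hw⟩

theorem frontier_closure_connectedComponentIn_interior [LocallyConnectedSpace X] {K : Set X}
    (hK : IsClosed K) (x : X) :
    frontier (closure (connectedComponentIn (interior K) x)) =
      frontier (connectedComponentIn (interior K) x) := by
  refine frontier_closure_subset.antisymm fun w hw => ⟨subset_closure hw.1, fun hwi => ?_⟩
  have hKx : closure (connectedComponentIn (interior K) x) ⊆ K :=
    closure_minimal ((connectedComponentIn_subset _ x).trans interior_subset) hK
  exact (frontier_connectedComponentIn_interior_subset x hw).2 (interior_mono hKx hwi)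

end Frontier

section Full

theorem isConnected_compl_closedBall {E : Type*} [NormedAddCommGroup E] [NormedSpace ℝ E]
    (h : 1 < Module.rank ℝ E) (x : E) {r : ℝ} (hr : 0 ≤ r) : IsConnected (closedBall x r)ᶜ := by
  have himage : (closedBall x r)ᶜ =
      (fun p : ℝ × E => x + p.1 • p.2) '' Ioi r ×ˢ sphere 0 1 := by
    ext y
    simp only [mem_compl_iff, mem_closedBall, not_le, dist_eq_norm]
    refine ⟨fun hy => ⟨(‖y - x‖, ‖y - x‖⁻¹ • (y - x)), ⟨hy, ?_⟩, ?_⟩, ?_⟩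
    · simp [norm_smul, (hr.trans_lt hy).ne']
    · simp [smul_smul, (hr.trans_lt hy).ne']
    · rintro ⟨⟨t, v⟩, ⟨ht, hv⟩, rfl⟩
      rw [add_sub_cancel_left, norm_smul, mem_sphere_zero_iff_norm.1 hv, mul_one]
      exact lt_of_lt_of_le ht (le_abs_self t)
  rw [himage]
  exact (isConnected_Ioi.prod (isConnected_sphere h 0 zero_le_one)).image _ (by fun_prop)

theorem IsFull.isConnected_compl {K : Set ℂ} (hfull : IsFull K) (hK : Bornology.IsBounded K) :
    IsConnected Kᶜ := by
  obtain ⟨r, hr, hKr⟩ := hK.subset_closedBall_lt 0 0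
  have hE : IsConnected (closedBall (0 : ℂ) r)ᶜ :=
    isConnected_compl_closedBall (by simp [Complex.rank_real_complex]) 0 hr.le
  have hEK : (closedBall (0 : ℂ) r)ᶜ ⊆ Kᶜ := compl_subset_compl.2 hKr
  obtain ⟨d, hd⟩ := hE.nonempty
  refine ⟨⟨d, hEK hd⟩, isPreconnected_of_forall d fun w hw => ?_⟩
  obtain ⟨y, hyw, hyE⟩ := not_subset.1 fun hsub => hfull w hw (isBounded_closedBall.subset hsub)
  exact ⟨(closedBall 0 r)ᶜ ∪ connectedComponentIn Kᶜ w,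
    union_subset hEK (connectedComponentIn_subset _ _), Or.inl hd,
    Or.inr (mem_connectedComponentIn hw),
    hE.isPreconnected.union y hyE hyw isPreconnected_connectedComponentIn⟩

end Full

theorem interior_component_boundary_locally_connected_general {K : Set ℂ} (hK : IsClosed K)
    (hKc : IsConnected Kᶜ) [LocallyConnectedSpace K] (x : interior K) :
    LocallyConnectedSpace (frontier (closure (connectedComponentIn (interior K) (x : ℂ)))) := by
  have hfrontier := frontier_connectedComponentIn_interior_subset (K := K) (x : ℂ)
  have hpre : IsPreconnected (frontier (connectedComponentIn (interior K) (x : ℂ))) :=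
    isPreconnected_frontier_connectedComponentIn isOpen_interior
      (closure_compl (s := K) ▸ hKc.closure) (x : ℂ)
  rw [frontier_closure_connectedComponentIn_interior hK]
  exact locallyConnectedSpace_of_subset_closure hK
    (hK.isOpen_compl.isConnected_iff_isPathConnected.1 hKc) disjoint_compl_left hpre
    isClosed_frontier (hfrontier.trans hK.frontier_subset)
    (hfrontier.trans (frontier_compl K ▸ frontier_subset_closure))

/-- Let `K ⊂ ℂ` be compact, connected, full and locally connected. Then the closure of
any connected component of the interior of `K` has locally connected boundary. -/
theorem interior_component_boundary_locally_connected (K : Set ℂ)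
    (hK : IsCompact K) (hconn : IsConnected K) (hfull : IsFull K)
    (hlc : ∀ w ∈ K, ∀ U ∈ nhds w, ∃ V ∈ nhds w, V ⊆ U ∧ IsConnected (V ∩ K))
    (x : ℂ) (hx : x ∈ interior K)
    (K₀ : Set ℂ) (hK₀ : K₀ = closure (connectedComponentIn (interior K) x)) :
    ∀ z ∈ frontier K₀, ∀ U ∈ nhds z, ∃ V ∈ nhds z, V ⊆ U ∧
      IsConnected (V ∩ frontier K₀) := by
  have := locallyConnectedSpace_coe_iff_isConnected_inter.2 hlc
  exact hK₀ ▸ locallyConnectedSpace_coe_iff_isConnected_inter.1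
    (interior_component_boundary_locally_connected_general hK.isClosed
      (hfull.isConnected_compl hK.isBounded) ⟨x, hx⟩)
end
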